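/- arXiv:1708.00910 — 2 statements merged into one kernel-verified Lean document; each statement's English description precedes it below -/
import Mathlib

section
/- Let X be a rearrangement-invariant Banach function space over 𝕋 with Köthe dual X'. Then for every f ∈ X, ‖f‖_X = sup{ |⟨f, p⟩| : p is a trigonometric polynomial with ‖p‖_{X'} ≤ 1 }, where ⟨f,g⟩ = ∫_𝕋 f ḡ dm. -/
open MeasureTheory Filter Topology ComplexConjugate
open scoped ENNReal

noncomputable section

instance fact_two_pi_pos : Fact (0 < 2 * Real.pi) := ⟨by positivity⟩

/-- The unit circle, modelled additively as `ℝ / 2πℤ`. -/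
abbrev 𝕋 := AddCircle (2 * Real.pi)

/-- Normalized Lebesgue (Haar) measure on the circle. -/
def μ : Measure 𝕋 := AddCircle.haarAddCircle

/-- A (quasi-)norm functional on measurable functions on the circle, with values in `ℝ≥0∞`. -/
abbrev NormFn := (𝕋 → ℂ) → ℝ≥0∞

/-- Membership in the function space determined by the norm functional `N`. -/
def MemN (N : NormFn) (f : 𝕋 → ℂ) : Prop :=
  AEStronglyMeasurable f μ ∧ N f < ⊤

/-- The closed unit ball of the space determined by `N`. -/
def unitBall (N : NormFn) : Set (𝕋 → ℂ) :=
  {f | AEStronglyMeasurable f μ ∧ N f ≤ 1}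

/-- The Köthe dual (associate space) norm of `N`. -/
def kdualN (N : NormFn) : NormFn := fun g =>
  ⨆ f : unitBall N, ∫⁻ t, (‖f.1 t * g t‖₊ : ℝ≥0∞) ∂μ

/-- The norm of the space `M(X,Y)` of pointwise multipliers, i.e. the operator norm of
multiplication by `a` from the space of `NX` to the space of `NY`. -/
def multN (NX NY : NormFn) : NormFn := fun a =>
  ⨆ f : unitBall NX, NY (fun t => a t * f.1 t)

/-- The norm of the pointwise product space `X ⊙ Y`. -/
def prodN (NX NY : NormFn) : NormFn := fun h =>
  ⨅ p : {p : (𝕋 → ℂ) × (𝕋 → ℂ) //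
      AEStronglyMeasurable p.1 μ ∧ AEStronglyMeasurable p.2 μ ∧
      h =ᵐ[μ] fun t => p.1 t * p.2 t},
    NX p.1.1 * NY p.1.2

/-- Membership in the Hardy space `H[X]`: membership in `X` together with the vanishing of all
negative Fourier coefficients. -/
def HardyMemN (N : NormFn) (f : 𝕋 → ℂ) : Prop :=
  AEStronglyMeasurable f μ ∧ N f < ⊤ ∧ ∀ n : ℤ, n < 0 → fourierCoeff f n = 0

/-- Operator norm of `T` from the space of `N1` to that of `N2`. -/
def opN (N1 N2 : NormFn) (T : (𝕋 → ℂ) → (𝕋 → ℂ)) : ℝ≥0∞ :=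
  ⨆ f : unitBall N1, N2 (T f.1)

/-- Operator norm of `T` restricted to the Hardy space of `N1`, measured in `N2`. -/
def hardyOpN (N1 N2 : NormFn) (T : (𝕋 → ℂ) → (𝕋 → ℂ)) : ℝ≥0∞ :=
  ⨆ f : {f : 𝕋 → ℂ // HardyMemN N1 f ∧ N1 f ≤ 1}, N2 (T f.1)

/-- `P` is (a realization of) the Riesz projection: it respects a.e. equality and, on integrable
functions, keeps the Fourier coefficients with nonnegative index and kills the others. -/
def IsRieszProj (P : (𝕋 → ℂ) → (𝕋 → ℂ)) : Prop :=
  (∀ f g, f =ᵐ[μ] g → P f =ᵐ[μ] P g) ∧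
  (∀ f g, P (f + g) =ᵐ[μ] P f + P g) ∧
  (∀ (c : ℂ) f, P (fun t => c * f t) =ᵐ[μ] fun t => c * P f t) ∧
  (∀ f, Integrable f μ → Integrable (P f) μ ∧
    ∀ n : ℤ, fourierCoeff (P f) n = if 0 ≤ n then fourierCoeff f n else 0)

/-- The flip operator `(Jf)(t) = t⁻¹ f(t⁻¹)`, written additively on `ℝ/2πℤ`. -/
def Jflip (f : 𝕋 → ℂ) : 𝕋 → ℂ := fun x => fourier (-1) x * f (-x)

/-- The dilation operator `D_s`: `(D_s f)(e^{iθ}) = f(e^{iθs})` for `θs ∈ [0,2π)`, `0` otherwise. -/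
def dilOp (s : ℝ) (f : 𝕋 → ℂ) : 𝕋 → ℂ := fun x =>
  let θ : ℝ := (AddCircle.equivIco (2 * Real.pi) 0 x : ℝ)
  if 0 ≤ s * θ ∧ s * θ < 2 * Real.pi then f ((s * θ : ℝ) : 𝕋) else 0

/-- Operator norm of the dilation `D_s` on the space of `N`. -/
def dilNorm (N : NormFn) (s : ℝ) : ℝ≥0∞ :=
  ⨆ f : unitBall N, N (dilOp s f.1)

/-- `α` is the lower Boyd index of the space of `N`. -/
def boydLower (N : NormFn) (α : ℝ) : Prop :=
  Tendsto (fun s : ℝ => Real.log (dilNorm N (1 / s)).toReal / Real.log s) (𝓝[>] 0) (𝓝 α)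

/-- `β` is the upper Boyd index of the space of `N`. -/
def boydUpper (N : NormFn) (β : ℝ) : Prop :=
  Tendsto (fun s : ℝ => Real.log (dilNorm N (1 / s)).toReal / Real.log s) atTop (𝓝 β)

/-- The space of `N` has nontrivial Boyd indices. -/
def NontrivialBoyd (N : NormFn) : Prop :=
  ∃ α β : ℝ, 0 < α ∧ β < 1 ∧ boydLower N α ∧ boydUpper N β

/-- Trigonometric polynomials. -/
def IsTrigPoly (f : 𝕋 → ℂ) : Prop :=
  ∃ (n : ℕ) (c : ℤ → ℂ), f = fun x => ∑ k ∈ Finset.Icc (-(n : ℤ)) n, c k * fourier k x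

/-- Analytic trigonometric polynomials. -/
def IsAnalyticPoly (f : 𝕋 → ℂ) : Prop :=
  ∃ (n : ℕ) (c : ℕ → ℂ), f = fun x => ∑ k ∈ Finset.range (n + 1), c k * fourier (k : ℤ) x

/-- The Fejér kernel `K_n`. -/
def fejer (n : ℕ) : 𝕋 → ℂ := fun x =>
  ∑ k ∈ Finset.Icc (-(n : ℤ)) n, (1 - (|(k : ℝ)| / (n + 1)) : ℂ) * fourier k x

/-- Convolution with the Fejér kernel, `f * K_n`. -/
def convFejer (n : ℕ) (f : 𝕋 → ℂ) : 𝕋 → ℂ := fun x =>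
  ∫ y, f y * fejer n (x - y) ∂μ

/-- The Banach envelope norm of `N`. -/
def envN (N : NormFn) : NormFn := fun f =>
  ⨅ d : {d : Σ n : ℕ, Fin n → 𝕋 → ℂ // f =ᵐ[μ] fun t => ∑ i, d.2 i t},
    ∑ i, N (d.1.2 i)

/-- The Banach envelope norm of the Hardy space `H[Z]` (decompositions within `H[Z]`). -/
def envHardyN (N : NormFn) : NormFn := fun f =>
  ⨅ d : {d : Σ n : ℕ, Fin n → 𝕋 → ℂ //
      (∀ i, HardyMemN N (d.2 i)) ∧ f =ᵐ[μ] fun t => ∑ i, d.2 i t},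
    ∑ i, N (d.1.2 i)

/-- The norm of the 1/2-concavification `Z^{(1/2)}`: `‖f‖ = ‖|f|^{1/2}‖²`. -/
def concavHalf (N : NormFn) : NormFn := fun f =>
  (N (fun t => (Real.sqrt ‖f t‖ : ℂ))) ^ 2

/-- `dist_{M(X,Y)}(a, conj H[M(X,Y)])`: the infimum of multiplier norms of symbols `b` whose
Fourier coefficients agree with those of `a` for positive indices. -/
def hankelDist (NX NY : NormFn) (a : 𝕋 → ℂ) : ℝ≥0∞ :=
  ⨅ b : {b : 𝕋 → ℂ // AEStronglyMeasurable b μ ∧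
      ∀ k : ℤ, 0 < k → fourierCoeff b k = fourierCoeff a k},
    multN NX NY b.1

/-- The Kuratowski measure of noncompactness of the set `A`, with diameters measured by `N`. -/
def setMNC (N : NormFn) (A : Set (𝕋 → ℂ)) : ℝ≥0∞ :=
  ⨅ d : {d : ℝ≥0∞ // ∃ (n : ℕ) (B : Fin n → Set (𝕋 → ℂ)),
      (∀ f ∈ A, ∃ i, f ∈ B i) ∧
      ∀ i, ∀ f ∈ B i, ∀ g ∈ B i, N (fun t => f t - g t) ≤ d}, d.1

/-- The decreasing rearrangement `f*` of `f`. -/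
def decRearr (f : 𝕋 → ℂ) (s : ℝ) : ℝ≥0∞ :=
  sInf {l : ℝ≥0∞ | μ {t | l < (‖f t‖₊ : ℝ≥0∞)} ≤ ENNReal.ofReal s}

/-- The Lorentz norm `‖f‖_{L^{p,q}}` on the circle (total measure 1). -/
def lorentzN (p q : ℝ≥0∞) : NormFn := fun f =>
  if q = ⊤ then ⨆ s : Set.Ioo (0 : ℝ) 1, decRearr f s.1 * ENNReal.ofReal (s.1 ^ (1 / p).toReal)
  else (∫⁻ s in Set.Ioo (0 : ℝ) 1,
      (decRearr f s * ENNReal.ofReal (s ^ (1 / p).toReal)) ^ q.toReal / ENNReal.ofReal s)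
    ^ (1 / q).toReal

/-- `dist_{L^{p,q}}(a, conj H^{p,q})` expressed via matching of positive Fourier coefficients. -/
def lorDist (p q : ℝ≥0∞) (a : 𝕋 → ℂ) : ℝ≥0∞ :=
  ⨅ b : {b : 𝕋 → ℂ // AEStronglyMeasurable b μ ∧
      ∀ k : ℤ, 0 < k → fourierCoeff b k = fourierCoeff a k},
    lorentzN p q b.1

/-- The analytic polynomial with coefficients `c 0, …, c n`. -/
def aPoly (n : ℕ) (c : ℕ → ℂ) : 𝕋 → ℂ := fun x =>
  ∑ k ∈ Finset.range (n + 1), c k * fourier (k : ℤ) x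

/-- The polynomial `p^c(t) = conj (p(1/t))`, i.e. with conjugated coefficients. -/
def aPolyC (n : ℕ) (c : ℕ → ℂ) : 𝕋 → ℂ := aPoly n fun k => (starRingEnd ℂ) (c k)

/-- A Banach function space over the circle, encoded by its norm functional. -/
structure BFS where
  N : NormFn
  ae_congr : ∀ f g, f =ᵐ[μ] g → N f = N g
  add_le : ∀ f g, N (f + g) ≤ N f + N g
  smul_eq : ∀ (c : ℂ) (f), N (fun t => c * f t) = (‖c‖₊ : ℝ≥0∞) * N f
  ideal : ∀ f g, AEStronglyMeasurable g μ → (∀ᵐ t ∂μ, ‖g t‖ ≤ ‖f t‖) → N g ≤ N f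
  const_finite : N (fun _ => 1) < ⊤
  norm_eq_zero : ∀ f, AEStronglyMeasurable f μ → N f = 0 → f =ᵐ[μ] fun _ => 0
  semiFatou : ∀ (f : ℕ → 𝕋 → ℂ) (g : 𝕋 → ℂ),
    (∀ n, AEStronglyMeasurable (f n) μ) → AEStronglyMeasurable g μ →
    (∀ᵐ t ∂μ, Monotone (fun n => ‖f n t‖) ∧
      Tendsto (fun n => ‖f n t‖) atTop (𝓝 ‖g t‖)) →
    N g < ⊤ → N g = ⨆ n, N (f n)
  complete : ∀ f : ℕ → 𝕋 → ℂ, (∀ n, AEStronglyMeasurable (f n) μ) →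
    (∑' n, N (f n)) < ⊤ →
    ∃ g, AEStronglyMeasurable g μ ∧ N g < ⊤ ∧
      Tendsto (fun n => N (fun t => g t - ∑ k ∈ Finset.range n, f k t)) atTop (𝓝 0)

/-- A quasi-Banach function space over the circle, with quasi-triangle constant `kappa`. -/
structure QBFS where
  N : NormFn
  kappa : ℝ≥0∞
  one_le_kappa : 1 ≤ kappa
  kappa_finite : kappa < ⊤
  ae_congr : ∀ f g, f =ᵐ[μ] g → N f = N g
  add_le : ∀ f g, N (f + g) ≤ kappa * (N f + N g)
  smul_eq : ∀ (c : ℂ) (f), N (fun t => c * f t) = (‖c‖₊ : ℝ≥0∞) * N f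
  ideal : ∀ f g, AEStronglyMeasurable g μ → (∀ᵐ t ∂μ, ‖g t‖ ≤ ‖f t‖) → N g ≤ N f
  const_finite : N (fun _ => 1) < ⊤
  norm_eq_zero : ∀ f, AEStronglyMeasurable f μ → N f = 0 → f =ᵐ[μ] fun _ => 0
  semiFatou : ∀ (f : ℕ → 𝕋 → ℂ) (g : 𝕋 → ℂ),
    (∀ n, AEStronglyMeasurable (f n) μ) → AEStronglyMeasurable g μ →
    (∀ᵐ t ∂μ, Monotone (fun n => ‖f n t‖) ∧
      Tendsto (fun n => ‖f n t‖) atTop (𝓝 ‖g t‖)) →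
    N g < ⊤ → N g = ⨆ n, N (f n)

/-- Rearrangement invariance of the norm functional `N`. -/
def RearrInvN (N : NormFn) : Prop :=
  ∀ f g, AEStronglyMeasurable f μ → AEStronglyMeasurable g μ →
    (∀ lam : ℝ, 0 < lam → μ {t | lam < ‖f t‖} = μ {t | lam < ‖g t‖}) →
    N f = N g

/-- `f` is an order continuous element of the space of `N`. -/
def OrderContElemN (N : NormFn) (f : 𝕋 → ℂ) : Prop :=
  MemN N f ∧ ∀ g : ℕ → 𝕋 → ℂ, (∀ n, AEStronglyMeasurable (g n) μ) →
    (∀ n, ∀ᵐ t ∂μ, ‖g n t‖ ≤ ‖f t‖) →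
    (∀ᵐ t ∂μ, Tendsto (fun n => ‖g n t‖) atTop (𝓝 0)) →
    Tendsto (fun n => N (g n)) atTop (𝓝 0)

/-- The space of `N` is order continuous (equivalently, separable). -/
def OrderContN (N : NormFn) : Prop :=
  ∀ f, MemN N f → OrderContElemN N f

/-- The Fatou property of the norm functional `N`. -/
def FatouN (N : NormFn) : Prop :=
  ∀ (f : ℕ → 𝕋 → ℂ) (g : 𝕋 → ℂ),
    (∀ n, AEStronglyMeasurable (f n) μ) → AEStronglyMeasurable g μ →
    (∀ᵐ t ∂μ, Monotone (fun n => ‖f n t‖) ∧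
      Tendsto (fun n => ‖f n t‖) atTop (𝓝 ‖g t‖)) →
    N g = ⨆ n, N (f n)

/-!
The unit ball of `X` is convex, and by the semi-Fatou property it is closed in `X ∩ L²` for the `L²`
norm, so Hahn–Banach in `L²` gives the Lorentz–Luxemburg identity: the norm of `f` is the supremum
of `∫ |f g|` over the unit ball of `X'`, hence of `|⟨f, g⟩|` over its bounded elements. Translation
invariance of `X` embeds `X` into `L¹` and makes convolution with a kernel of `L¹` norm one a
contraction of `X'`. Convolving `g` with the de la Vallée-Poussin kernels therefore gives
trigonometric polynomials in the unit ball of `X'`, and their pairings with `f` are averages of the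
continuous function `y ↦ ⟨f, g(· - y)⟩` concentrating at `y = 0`.
-/

open scoped Convolution InnerProductSpace

open ContinuousLinearMap (lsmul lsmul_apply)

section Hilbert

variable {𝕜 H : Type*} [RCLike 𝕜] [NormedAddCommGroup H] [InnerProductSpace 𝕜 H] [CompleteSpace H]
  [NormedSpace ℝ H] [IsScalarTower ℝ 𝕜 H]

theorem exists_norm_inner_le_one_of_notMem_closure {s : Set H} (hs : Convex ℝ s)
    (balanced : Balanced 𝕜 s) (h0 : 0 ∈ s) {x : H} (hx : x ∉ closure s) :
    ∃ v : H, (∀ u ∈ s, ‖⟪v, u⟫_𝕜‖ ≤ 1) ∧ 1 < ‖⟪v, x⟫_𝕜‖ := by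
  obtain ⟨L, r, hLs, hLx⟩ :=
    RCLike.geometric_hahn_banach_closed_point (𝕜 := 𝕜) hs.closure isClosed_closure hx
  have r_pos : 0 < r := by simpa using hLs 0 (subset_closure h0)
  have norm_le (u) (hu : u ∈ s) : ‖L u‖ ≤ r := by
    obtain ⟨c, hc, hcL⟩ := RCLike.exists_norm_eq_mul_self (L u)
    have rotated := hLs (c • u) (subset_closure (balanced.smul_mem hc.le hu))
    rw [map_smul, smul_eq_mul, ← hcL, RCLike.ofReal_re] at rotated
    exact rotated.le
  let v : H := ((r⁻¹ : ℝ) : 𝕜) • (InnerProductSpace.toDual 𝕜 H).symm L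
  have norm_inner (u : H) : ‖⟪v, u⟫_𝕜‖ = ‖L u‖ / r := by
    rw [inner_smul_left, InnerProductSpace.toDual_symm_apply, RCLike.conj_ofReal, norm_mul,
      RCLike.norm_of_nonneg (inv_nonneg.mpr r_pos.le), inv_mul_eq_div]
  refine ⟨v, fun u hu => ?_, ?_⟩
  · rw [norm_inner, div_le_one r_pos]
    exact norm_le u hu
  · rw [norm_inner, one_lt_div r_pos]
    exact hLx.trans_le (RCLike.re_le_norm _)

end Hilbert

section Homogeneous

variable {𝕜 E : Type*} [RCLike 𝕜] [SMul 𝕜 E]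

theorem le_of_smul_le_one_imp {p q : E → ℝ≥0∞} (hp : ∀ (c : 𝕜) x, p (c • x) = ‖c‖ₑ * p x)
    (hq : ∀ (c : 𝕜) x, q (c • x) = ‖c‖ₑ * q x) {x : E}
    (h : ∀ c : 𝕜, q (c • x) ≤ 1 → p (c • x) ≤ 1) : p x ≤ q x := by
  refine le_of_forall_gt_imp_ge_of_dense fun r hr => ?_
  rcases eq_or_ne r ⊤ with rfl | r_top
  · exact le_top
  have r_ne : r ≠ 0 := hr.ne_bot
  have enorm_inv : ‖((r.toReal⁻¹ : ℝ) : 𝕜)‖ₑ = r⁻¹ := by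
    rw [← ofReal_norm, RCLike.norm_of_nonneg (by positivity),
      ENNReal.ofReal_inv_of_pos (ENNReal.toReal_pos r_ne r_top), ENNReal.ofReal_toReal r_top]
  have scaled := h (r.toReal⁻¹ : ℝ)
  rw [hp, hq, enorm_inv, ENNReal.inv_mul_le_iff r_ne r_top, ENNReal.inv_mul_le_iff r_ne r_top,
    mul_one] at scaled
  exact scaled hr.le

end Homogeneous

section Duality

variable {α : Type*} {m : MeasurableSpace α} {ν : Measure α}

/-- `alignedTo b r` has size `|r|` and the phase of `b`, so that pairing it with `b` gives `r |b|`;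
it vanishes when `b = 0`. -/
def alignedTo (b : ℂ) (r : ℝ) : ℂ := r * (b / ‖b‖)

theorem norm_alignedTo_le (b : ℂ) (r : ℝ) : ‖alignedTo b r‖ ≤ |r| := by
  rw [alignedTo, norm_mul, norm_div, Complex.norm_real, Complex.norm_real, norm_norm]
  exact mul_le_of_le_one_right (norm_nonneg _) (div_self_le_one _)

theorem mul_conj_alignedTo (b : ℂ) (r : ℝ) : b * conj (alignedTo b r) = (r * ‖b‖ : ℝ) := by
  rcases eq_or_ne b 0 with rfl | hb
  · simp
  · have norm_ne : (‖b‖ : ℂ) ≠ 0 := by simpa using hb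
    simp only [alignedTo, map_mul, map_div₀, Complex.conj_ofReal, Complex.ofReal_mul]
    field_simp
    rw [mul_right_comm, Complex.mul_conj', mul_comm]

theorem measurable_uncurry_alignedTo : Measurable (Function.uncurry alignedTo) := by
  unfold alignedTo Function.uncurry
  fun_prop

theorem tendsto_min_natCast (r : ℝ) : Tendsto (fun n : ℕ => min r n) atTop (𝓝 r) := by
  refine tendsto_const_nhds.congr' ?_
  filter_upwards [tendsto_natCast_atTop_atTop.eventually_ge_atTop r] with n hn
  exact (min_eq_left hn).symm

theorem monotone_min_natCast (r : ℝ) : Monotone fun n : ℕ => min r n :=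
  fun _ _ hkl => min_le_min_left r (Nat.cast_le.mpr hkl)

theorem enorm_integral_mul_conj_alignedTo {b : α → ℂ} {r : α → ℝ}
    (hrb : Integrable (fun t => r t * ‖b t‖) ν) (hr : ∀ t, 0 ≤ r t) :
    ‖∫ t, b t * conj (alignedTo (b t) (r t)) ∂ν‖ₑ = ∫⁻ t, ‖r t * ‖b t‖‖ₑ ∂ν := by
  have rb_nonneg (t) : 0 ≤ r t * ‖b t‖ := mul_nonneg (hr t) (norm_nonneg _)
  simp only [mul_conj_alignedTo, integral_complex_ofReal]
  rw [← ofReal_integral_norm_eq_lintegral_enorm hrb, ← ofReal_norm, Complex.norm_real,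
    Real.norm_of_nonneg (integral_nonneg rb_nonneg)]
  simp only [Real.norm_of_nonneg (rb_nonneg _)]

theorem enorm_integral_mul_conj_le (f g : α → ℂ) :
    ‖∫ t, f t * conj (g t) ∂ν‖ₑ ≤ ∫⁻ t, ‖f t * g t‖ₑ ∂ν := by
  simpa only [enorm_mul, RCLike.enorm_conj] using
    enorm_integral_le_lintegral_enorm fun t => f t * conj (g t)

theorem enorm_inner_toLp (v : Lp ℂ 2 ν) {u : α → ℂ} (hu : MemLp u 2 ν) :
    ‖⟪v, hu.toLp u⟫_ℂ‖ₑ = ‖∫ t, v t * conj (u t) ∂ν‖ₑ := by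
  rw [← RCLike.enorm_conj, inner_conj_symm, L2.inner_def]
  congr 1
  refine integral_congr_ae ?_
  filter_upwards [hu.coeFn_toLp] with t ht
  rw [ht, RCLike.inner_apply]

theorem lintegral_enorm_mul_le_of_forall_bounded {a b : α → ℂ} (ha : AEStronglyMeasurable a ν)
    (hb : Integrable b ν) {S : ℝ≥0∞}
    (h : ∀ w : α → ℂ, AEStronglyMeasurable w ν → (∀ t, ‖w t‖ ≤ ‖a t‖) →
      (∃ C : ℝ, ∀ t, ‖w t‖ ≤ C) → ‖∫ t, b t * conj (w t) ∂ν‖ₑ ≤ S) :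
    ∫⁻ t, ‖a t * b t‖ₑ ∂ν ≤ S := by
  let r (n : ℕ) (t : α) : ℝ := min ‖a t‖ n
  have r_nonneg (n t) : 0 ≤ r n t := by positivity
  have r_meas (n) : AEMeasurable (r n) ν := ha.norm.aemeasurable.min aemeasurable_const
  have w_le (n t) : ‖alignedTo (b t) (r n t)‖ ≤ r n t := by
    simpa only [abs_of_nonneg (r_nonneg n t)] using norm_alignedTo_le (b t) (r n t)
  have truncated_le (n) : ∫⁻ t, ‖r n t * ‖b t‖‖ₑ ∂ν ≤ S := by
    have rb_int : Integrable (fun t => r n t * ‖b t‖) ν :=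
      hb.norm.bdd_mul (r_meas n).aestronglyMeasurable (c := n) <| .of_forall fun t => by
        rw [Real.norm_of_nonneg (r_nonneg n t)]
        exact min_le_right _ _
    rw [← enorm_integral_mul_conj_alignedTo rb_int (r_nonneg n)]
    exact h _
      (measurable_uncurry_alignedTo.comp_aemeasurable
        (hb.aemeasurable.prodMk (r_meas n))).aestronglyMeasurable
      (fun t => (w_le n t).trans (min_le_left _ _))
      ⟨n, fun t => (w_le n t).trans (min_le_right _ _)⟩
  refine le_of_tendsto' (lintegral_tendsto_of_tendsto_of_monotone
    (fun n => ((r_meas n).mul hb.norm.aemeasurable).enorm) (.of_forall fun t k l hkl => ?_)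
    (.of_forall fun t => ?_)) truncated_le
  · change ‖r k t * ‖b t‖‖ₑ ≤ ‖r l t * ‖b t‖‖ₑ
    rw [enorm_mul, enorm_mul, Real.enorm_of_nonneg (r_nonneg k t),
      Real.enorm_of_nonneg (r_nonneg l t)]
    gcongr
    exact monotone_min_natCast _ hkl
  · rw [enorm_mul, ← enorm_norm (a t), ← enorm_norm (b t), ← enorm_mul]
    exact (((tendsto_min_natCast ‖a t‖).mul_const _).enorm)

end Duality

section KotheDual

instance : IsProbabilityMeasure μ := inferInstanceAs (IsProbabilityMeasure AddCircle.haarAddCircle)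

variable {N : NormFn} {g w : 𝕋 → ℂ}

theorem kdualN_le_iff {S : ℝ≥0∞} :
    kdualN N g ≤ S ↔
      ∀ h, AEStronglyMeasurable h μ → N h ≤ 1 → ∫⁻ t, ‖h t * g t‖ₑ ∂μ ≤ S :=
  iSup_le_iff.trans ⟨fun H h hm hN => H ⟨h, hm, hN⟩, fun H h => H h.1 h.2.1 h.2.2⟩

theorem kdualN_smul (c : ℂ) (g : 𝕋 → ℂ) : kdualN N (c • g) = ‖c‖ₑ * kdualN N g := by
  simp only [kdualN, ENNReal.mul_iSup]
  refine iSup_congr fun h => ?_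
  rw [← lintegral_const_mul' _ _ enorm_ne_top]
  refine lintegral_congr fun t => ?_
  change ‖h.1 t * (c * g t)‖ₑ = ‖c‖ₑ * ‖h.1 t * g t‖ₑ
  rw [mul_left_comm, enorm_mul]

theorem kdualN_mono (hwg : ∀ t, ‖w t‖ ≤ ‖g t‖) : kdualN N w ≤ kdualN N g :=
  iSup_mono fun h => lintegral_mono fun t => enorm_le_iff_norm_le.mpr <| by
    simpa only [norm_mul] using mul_le_mul_of_nonneg_left (hwg t) (norm_nonneg (h.1 t))

end KotheDual

namespace BFS

variable {X : BFS} {f g h : 𝕋 → ℂ}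

theorem N_smul (X : BFS) (c : ℂ) (f : 𝕋 → ℂ) : X.N (c • f) = ‖c‖ₑ * X.N f := X.smul_eq c f

theorem N_lt_top_of_bounded {C : ℝ} (hf : AEStronglyMeasurable f μ) (hC : ∀ t, ‖f t‖ ≤ C) :
    X.N f < ⊤ := by
  have le_const : X.N f ≤ X.N ((C : ℂ) • fun _ => 1) := X.ideal _ _ hf <| .of_forall fun t => by
    simpa using (hC t).trans (le_abs_self C)
  rw [X.N_smul] at le_const
  exact le_const.trans_lt (ENNReal.mul_lt_top enorm_lt_top X.const_finite)

theorem N_le_liminf {u : ℕ → 𝕋 → ℂ} (hu : ∀ n, AEStronglyMeasurable (u n) μ) (hh : MemN X.N h)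
    (lim : ∀ᵐ t ∂μ, Tendsto (fun n => u n t) atTop (𝓝 (h t))) :
    X.N h ≤ liminf (fun n => X.N (u n)) atTop := by
  let I (n : ℕ) (t : 𝕋) : ℝ≥0∞ := ⨅ k, ‖u (k + n) t‖ₑ
  have I_le (n k t) : I n t ≤ ‖u (k + n) t‖ₑ := iInf_le _ k
  have I_ne_top (n t) : I n t ≠ ⊤ := ((I_le n 0 t).trans_lt enorm_lt_top).ne
  have I_mono (t) : Monotone (I · t) := fun m n hmn => le_iInf fun k => by
    simpa only [add_assoc, Nat.sub_add_cancel hmn] using I_le m (k + (n - m)) t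
  let v (n : ℕ) (t : 𝕋) : ℂ := (I n t).toReal
  have norm_v (n t) : ‖v n t‖ = (I n t).toReal := RCLike.norm_of_nonneg ENNReal.toReal_nonneg
  have v_meas (n) : AEStronglyMeasurable (v n) μ :=
    (Complex.measurable_ofReal.comp_aemeasurable
      (AEMeasurable.iInf fun k => (hu (k + n)).enorm).ennreal_toReal).aestronglyMeasurable
  have N_v_le (n k) : X.N (v n) ≤ X.N (u (k + n)) := by
    refine X.ideal _ _ (v_meas n) (.of_forall fun t => ?_)
    rw [norm_v, ← toReal_enorm (u (k + n) t)]
    exact ENNReal.toReal_mono enorm_ne_top (I_le n k t)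
  rw [liminf_eq_iSup_iInf_of_nat', X.semiFatou v h v_meas hh.1 ?_ hh.2]
  · exact iSup_mono fun n => le_iInf (N_v_le n)
  · filter_upwards [lim] with t ht
    simp only [norm_v]
    refine ⟨fun m n hmn => ENNReal.toReal_mono (I_ne_top n t) (I_mono t hmn), ?_⟩
    have iSup_I : ⨆ n, I n t = ‖h t‖ₑ := by
      rw [← ht.enorm.liminf_eq, liminf_eq_iSup_iInf_of_nat']
    rw [← toReal_enorm, ← iSup_I]
    exact (ENNReal.tendsto_toReal (iSup_I ▸ enorm_ne_top)).comp (tendsto_atTop_iSup (I_mono t))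

theorem lintegral_enorm_mul_le_N (hg : kdualN X.N g ≤ 1) (hf : AEStronglyMeasurable f μ) :
    ∫⁻ t, ‖f t * g t‖ₑ ∂μ ≤ X.N f := by
  let p (u : 𝕋 → ℂ) : ℝ≥0∞ := ∫⁻ t, ‖u t * g t‖ₑ ∂μ
  have p_smul (c : ℂ) (u : 𝕋 → ℂ) : p (c • u) = ‖c‖ₑ * p u := by
    rw [← lintegral_const_mul' _ _ enorm_ne_top]
    refine lintegral_congr fun t => ?_
    rw [Pi.smul_apply, smul_eq_mul, mul_assoc, enorm_mul]
  exact le_of_smul_le_one_imp p_smul X.N_smul fun c => kdualN_le_iff.mp hg _ (hf.const_smul c)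

theorem kdualN_le_one_of_forall_memLp (hg : MemLp g 2 μ)
    (h : ∀ u, MemLp u 2 μ → X.N u ≤ 1 → ‖∫ t, g t * conj (u t) ∂μ‖ₑ ≤ 1) : kdualN X.N g ≤ 1 := by
  refine kdualN_le_iff.mpr fun f hf hfN =>
    lintegral_enorm_mul_le_of_forall_bounded hf (hg.integrable one_le_two) ?_
  rintro w hw hwf ⟨C, hC⟩
  exact h w (.of_bound hw C (.of_forall hC)) ((X.ideal _ _ hw (.of_forall hwf)).trans hfN)

theorem convex_N_coeFn_le_one (X : BFS) : Convex ℝ {u : Lp ℂ 2 μ | X.N u ≤ 1} := by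
  intro u hu v hv a b ha hb hab
  have coeFn_eq : ⇑(a • u + b • v) =ᵐ[μ] (a : ℂ) • ⇑u + (b : ℂ) • ⇑v := by
    filter_upwards [Lp.coeFn_add (a • u) (b • v), Lp.coeFn_smul a u, Lp.coeFn_smul b v]
      with t hadd hau hbv
    rw [hadd, Pi.add_apply, hau, hbv]
    rfl
  have enorm_sum : ‖(a : ℂ)‖ₑ + ‖(b : ℂ)‖ₑ = 1 := by
    rw [← ofReal_norm, ← ofReal_norm, Complex.norm_of_nonneg ha, Complex.norm_of_nonneg hb,
      ← ENNReal.ofReal_add ha hb, hab, ENNReal.ofReal_one]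
  calc X.N ⇑(a • u + b • v) = X.N ((a : ℂ) • ⇑u + (b : ℂ) • ⇑v) := X.ae_congr _ _ coeFn_eq
    _ ≤ ‖(a : ℂ)‖ₑ * X.N u + ‖(b : ℂ)‖ₑ * X.N v := by
      simpa only [X.N_smul] using X.add_le ((a : ℂ) • ⇑u) ((b : ℂ) • ⇑v)
    _ ≤ ‖(a : ℂ)‖ₑ * 1 + ‖(b : ℂ)‖ₑ * 1 := by gcongr <;> assumption
    _ = 1 := by rw [mul_one, mul_one, enorm_sum]

theorem balanced_N_coeFn_le_one (X : BFS) : Balanced ℂ {u : Lp ℂ 2 μ | X.N u ≤ 1} := by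
  refine balanced_iff_smul_mem.mpr fun c hc u hu => ?_
  change X.N _ ≤ 1
  rw [X.ae_congr _ _ (Lp.coeFn_smul c u), X.N_smul]
  have enorm_le : ‖c‖ₑ ≤ 1 := by
    rwa [← ofReal_norm, ENNReal.ofReal_le_one]
  exact mul_le_one' enorm_le hu

theorem toLp_mem_closure_of_kdualN_kdualN_le_one (hh : MemLp h 2 μ)
    (hdual : kdualN (kdualN X.N) h ≤ 1) : hh.toLp h ∈ closure {u : Lp ℂ 2 μ | X.N u ≤ 1} := by
  by_contra h_notMem
  have zero_mem : (0 : Lp ℂ 2 μ) ∈ {u : Lp ℂ 2 μ | X.N u ≤ 1} := by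
    have N_zero : X.N 0 = 0 := by simpa using X.N_smul 0 0
    exact ((X.ae_congr _ _ (Lp.coeFn_zero ℂ 2 μ)).trans N_zero).trans_le zero_le_one
  obtain ⟨v, v_polar, hv⟩ := exists_norm_inner_le_one_of_notMem_closure (𝕜 := ℂ)
    X.convex_N_coeFn_le_one X.balanced_N_coeFn_le_one zero_mem h_notMem
  have kdualN_v : kdualN X.N v ≤ 1 :=
    kdualN_le_one_of_forall_memLp (Lp.memLp v) fun u hu hNu => by
      rw [← enorm_inner_toLp v hu, ← ofReal_norm, ENNReal.ofReal_le_one]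
      exact v_polar _ ((X.ae_congr _ _ hu.coeFn_toLp).trans_le hNu)
  refine hv.not_ge ?_
  rw [← ENNReal.ofReal_le_one, ofReal_norm, enorm_inner_toLp]
  exact (enorm_integral_mul_conj_le _ _).trans
    (kdualN_le_iff.mp hdual _ (Lp.aestronglyMeasurable v) kdualN_v)

theorem N_le_one_of_kdualN_kdualN_le_one (hh : MemLp h 2 μ) (hN : X.N h < ⊤)
    (hdual : kdualN (kdualN X.N) h ≤ 1) : X.N h ≤ 1 := by
  obtain ⟨u, hu_ball, hu_lim⟩ :=
    mem_closure_iff_seq_limit.mp (toLp_mem_closure_of_kdualN_kdualN_le_one hh hdual)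
  obtain ⟨φ, -, hφ⟩ := (tendstoInMeasure_of_tendsto_Lp hu_lim).exists_seq_tendsto_ae
  have lim : ∀ᵐ t ∂μ, Tendsto (fun n => u (φ n) t) atTop (𝓝 (h t)) := by
    filter_upwards [hφ, hh.coeFn_toLp] with t ht hht
    rwa [← hht]
  calc X.N h ≤ liminf (fun n => X.N (u (φ n))) atTop :=
        N_le_liminf (fun n => Lp.aestronglyMeasurable (u (φ n))) ⟨hh.1, hN⟩ lim
    _ ≤ liminf (fun _ => 1) atTop := liminf_le_liminf (.of_forall fun n => hu_ball (φ n))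
    _ = 1 := liminf_const 1

theorem N_le_kdualN_kdualN_of_memLp (hh : MemLp h 2 μ) (hN : X.N h < ⊤) :
    X.N h ≤ kdualN (kdualN X.N) h :=
  le_of_smul_le_one_imp X.N_smul kdualN_smul fun c =>
    N_le_one_of_kdualN_kdualN_le_one (hh.const_smul c) <| by
      rw [X.N_smul]
      exact ENNReal.mul_lt_top enorm_lt_top hN

theorem kdualN_kdualN_eq (hf : MemN X.N f) : kdualN (kdualN X.N) f = X.N f := by
  refine le_antisymm (kdualN_le_iff.mpr fun g _ hg => ?_) ?_
  · simpa only [mul_comm] using lintegral_enorm_mul_le_N hg hf.1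
  let trunc (n : ℕ) (t : 𝕋) : ℂ := (min ‖f t‖ n : ℝ)
  have norm_trunc (n t) : ‖trunc n t‖ = min ‖f t‖ n := Complex.norm_of_nonneg (by positivity)
  have trunc_meas (n) : AEStronglyMeasurable (trunc n) μ :=
    Complex.continuous_ofReal.comp_aestronglyMeasurable (hf.1.norm.inf aestronglyMeasurable_const)
  have trunc_le (n t) : ‖trunc n t‖ ≤ n := (norm_trunc n t).trans_le (min_le_right _ _)
  rw [X.semiFatou trunc f trunc_meas hf.1 (.of_forall fun t => ?_) hf.2]
  · exact iSup_le fun n => (N_le_kdualN_kdualN_of_memLp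
      (.of_bound (trunc_meas n) n (.of_forall (trunc_le n)))
      (N_lt_top_of_bounded (trunc_meas n) (trunc_le n))).trans
      (kdualN_mono fun t => (norm_trunc n t).trans_le (min_le_left _ _))
  · simp only [norm_trunc]
    exact ⟨monotone_min_natCast _, tendsto_min_natCast _⟩

end BFS

section Correlation

variable {G : Type*} [AddCommGroup G] [MeasurableSpace G] {ν : Measure G} {f g h : G → ℂ}
  {φ : G → ℝ}

/-- The cross-correlation `y ↦ ∫ f(x) conj (g(x - y)) dν(x)` of `f` and `g`, the pairing of `f` with
the translates of `g`. -/
def crossCorr (ν : Measure G) (f g : G → ℂ) (y : G) : ℂ := ∫ x, f x * conj (g (x - y)) ∂ν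

theorem crossCorr_zero : crossCorr ν f g 0 = ∫ x, f x * conj (g x) ∂ν := by
  simp only [crossCorr, sub_zero]

section Convolution

variable [MeasurableAdd₂ G] [MeasurableNeg G] [SFinite ν] [ν.IsAddLeftInvariant]

theorem integral_mul_conj_convolution {C : ℝ} (hφ : Integrable φ ν) (hf : Integrable f ν)
    (hg : AEStronglyMeasurable g ν) (hC : ∀ x, ‖g x‖ ≤ C) :
    ∫ x, f x * conj ((φ ⋆[lsmul ℝ ℝ, ν] g) x) ∂ν = ∫ y, φ y • crossCorr ν f g y ∂ν := by
  have integrable_prod :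
      Integrable (fun p : G × G => φ p.2 • (f p.1 * conj (g (p.1 - p.2)))) (ν.prod ν) := by
    have g_sub : AEStronglyMeasurable (fun p : G × G => conj (g (p.1 - p.2))) (ν.prod ν) :=
      Complex.continuous_conj.comp_aestronglyMeasurable
        (hg.comp_quasiMeasurePreserving (quasiMeasurePreserving_sub_of_right_invariant ν ν))
    refine ((hf.mul_prod hφ.ofReal).mul_bdd g_sub (c := C) (.of_forall fun p => ?_)).congr
      (.of_forall fun p => ?_)
    · simpa only [RCLike.norm_conj] using hC (p.1 - p.2)
    · change f p.1 * (φ p.2 : ℂ) * conj (g (p.1 - p.2)) = φ p.2 • (f p.1 * conj (g (p.1 - p.2)))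
      rw [Complex.real_smul, mul_comm (f p.1), mul_assoc]
  calc ∫ x, f x * conj ((φ ⋆[lsmul ℝ ℝ, ν] g) x) ∂ν
      = ∫ x, ∫ y, φ y • (f x * conj (g (x - y))) ∂ν ∂ν := by
        simp only [convolution_def, lsmul_apply, ← integral_conj, ← integral_const_mul,
          Complex.real_smul, map_mul, Complex.conj_ofReal, mul_left_comm]
    _ = ∫ y, ∫ x, φ y • (f x * conj (g (x - y))) ∂ν ∂ν := integral_integral_swap integrable_prod
    _ = ∫ y, φ y • crossCorr ν f g y ∂ν := by simp only [integral_smul, crossCorr]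

theorem lintegral_lintegral_enorm_mul_smul_sub_le {S : ℝ≥0∞} (hφ : AEStronglyMeasurable φ ν)
    (hh : AEStronglyMeasurable h ν) (hg : AEStronglyMeasurable g ν)
    (hS : ∀ y, ∫⁻ x, ‖h (x + y) * g x‖ₑ ∂ν ≤ S) :
    ∫⁻ x, ∫⁻ y, ‖h x * φ y • g (x - y)‖ₑ ∂ν ∂ν ≤ (∫⁻ y, ‖φ y‖ₑ ∂ν) * S := by
  have inner_le (y) : ∫⁻ x, ‖h x * φ y • g (x - y)‖ₑ ∂ν ≤ ‖φ y‖ₑ * S := by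
    calc ∫⁻ x, ‖h x * φ y • g (x - y)‖ₑ ∂ν = ‖φ y‖ₑ * ∫⁻ x, ‖h x * g (x - y)‖ₑ ∂ν := by
          simp only [mul_smul_comm, enorm_smul]
          exact lintegral_const_mul' _ _ enorm_ne_top
      _ = ‖φ y‖ₑ * ∫⁻ x, ‖h (x + y) * g x‖ₑ ∂ν := by
          simpa only [add_sub_cancel_right] using congrArg (‖φ y‖ₑ * ·)
            (lintegral_add_right_eq_self (fun x => ‖h x * g (x - y)‖ₑ) y).symm
      _ ≤ ‖φ y‖ₑ * S := by gcongr; exact hS y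
  rw [lintegral_lintegral_swap]
  · exact (lintegral_mono inner_le).trans_eq (lintegral_mul_const'' S hφ.enorm)
  · exact (hh.comp_fst.mul (hφ.convolution_integrand (lsmul ℝ ℝ) hg)).enorm

end Convolution

theorem lintegral_enorm_mul_lintegral_enorm_le [MeasurableAdd₂ G] [MeasurableNeg G]
    [IsProbabilityMeasure ν] [ν.IsAddLeftInvariant] [ν.IsNegInvariant] {S : ℝ≥0∞}
    (hh : AEStronglyMeasurable h ν) (hg : AEStronglyMeasurable g ν)
    (hS : ∀ y, ∫⁻ x, ‖h (x + y) * g x‖ₑ ∂ν ≤ S) :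
    (∫⁻ x, ‖h x‖ₑ ∂ν) * ∫⁻ x, ‖g x‖ₑ ∂ν ≤ S := by
  have averaged := lintegral_lintegral_enorm_mul_smul_sub_le (φ := fun _ => 1)
    aestronglyMeasurable_const hh hg hS
  simp only [one_smul, enorm_mul, lintegral_const_mul' _ _ enorm_ne_top,
    lintegral_sub_left_eq_self (fun x => ‖g x‖ₑ), enorm_one, lintegral_one, measure_univ,
    one_mul] at averaged
  rwa [lintegral_mul_const'' _ hh.enorm] at averaged

theorem continuous_crossCorr [TopologicalSpace G] [IsTopologicalAddGroup G] [BorelSpace G]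
    [IsLocallyFiniteMeasure ν] [ν.InnerRegularCompactLTTop] [ν.IsAddLeftInvariant]
    {p q : ℝ≥0∞} [Fact (1 ≤ p)] [Fact (p ≠ ⊤)] [Fact (1 ≤ q)] [p.HolderConjugate q]
    (hf : MemLp f p ν) (hg : MemLp g q ν) : Continuous (crossCorr ν f g) := by
  let pairing := (ContinuousLinearMap.mul ℂ ℂ).lpPairing ν p q
  have crossCorr_eq (y : G) :
      crossCorr ν f g y = pairing (DomAddAct.mk y +ᵥ hf.toLp f) (hg.star.toLp (star g)) := by
    have hf_translate : MemLp (fun x => f (y +ᵥ x)) p ν :=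
      hf.comp_measurePreserving (measurePreserving_vadd y ν)
    rw [DomAddAct.mk_vadd_toLp, ContinuousLinearMap.lpPairing_eq_integral, crossCorr,
      ← integral_add_right_eq_self (fun x => f x * conj (g (x - y))) y]
    refine integral_congr_ae ?_
    filter_upwards [hf_translate.coeFn_toLp, hg.star.coeFn_toLp] with x hfx hgx
    rw [hfx, hgx, add_sub_cancel_right, vadd_eq_add, add_comm x y]
    rfl
  have continuous_translate : Continuous fun y : G => DomAddAct.mk y +ᵥ hf.toLp f :=
    DomAddAct.continuous_mk.vadd continuous_const
  rw [funext crossCorr_eq]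
  exact (pairing.flip (hg.star.toLp (star g))).continuous.comp continuous_translate

end Correlation

section Polynomials

instance : μ.IsAddHaarMeasure := inferInstanceAs AddCircle.haarAddCircle.IsAddHaarMeasure

theorem isTrigPoly_sum (s : Finset ℤ) (c : ℤ → ℂ) :
    IsTrigPoly fun x => ∑ k ∈ s, c k * fourier k x := by
  let n : ℕ := s.sup Int.natAbs
  have subset_Icc : s ⊆ Finset.Icc (-n : ℤ) n := fun k hk => by
    have natAbs_le : k.natAbs ≤ n := Finset.le_sup (f := Int.natAbs) hk
    rw [Finset.mem_Icc]
    lia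
  refine ⟨n, fun k => if k ∈ s then c k else 0, funext fun x => ?_⟩
  rw [← Finset.sum_subset subset_Icc fun k _ hk => by simp only [if_neg hk, zero_mul]]
  exact Finset.sum_congr rfl fun k hk => by simp only [if_pos hk]

theorem fourier_sub {T : ℝ} (k : ℤ) (x y : AddCircle T) :
    fourier k (x - y) = fourier k x * fourier (-k) y := by
  rw [fourier_apply, fourier_apply, fourier_apply, smul_sub, sub_eq_add_neg, neg_smul,
    AddCircle.toCircle_add, Circle.coe_mul]

theorem norm_fourier_apply {T : ℝ} (k : ℤ) (x : AddCircle T) : ‖fourier k x‖ = 1 := by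
  rw [fourier_apply, Circle.norm_coe]

theorem isTrigPoly_convolution {φ : 𝕋 → ℝ} {q : C(𝕋, ℂ)} (hq : q ∈ fourierSubalgebra)
    (hqφ : ∀ x, q x = φ x) {g : 𝕋 → ℂ} (hg : Integrable g μ) :
    IsTrigPoly (φ ⋆[lsmul ℝ ℝ, μ] g) := by
  have q_mem_span : q ∈ Submodule.span ℂ (Set.range fourier) :=
    fourierSubalgebra_coe.le hq
  obtain ⟨c, rfl⟩ := Finsupp.mem_span_range_iff_exists_finsupp.mp q_mem_span
  have integrable_term (k : ℤ) : Integrable (fun t => fourier (-k) t * g t) μ :=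
    hg.bdd_mul (c := 1) (map_continuous (fourier (-k))).aestronglyMeasurable
      (.of_forall fun t => (norm_fourier_apply (-k) t).le)
  convert isTrigPoly_sum c.support fun k => c k * fourierCoeff g k using 1
  ext x
  calc (φ ⋆[lsmul ℝ ℝ, μ] g) x
      = ∫ t, ∑ k ∈ c.support, c k * fourier k x * (fourier (-k) t * g t) ∂μ := by
        rw [convolution_lsmul_swap]
        refine integral_congr_ae (.of_forall fun t => ?_)
        simp only [Complex.real_smul, ← hqφ, Finsupp.sum, ContinuousMap.coe_sum,
          Finset.sum_apply, ContinuousMap.coe_smul, Pi.smul_apply, smul_eq_mul, fourier_sub,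
          Finset.sum_mul, mul_assoc]
    _ = ∑ k ∈ c.support, c k * fourierCoeff g k * fourier k x := by
        rw [integral_finsetSum _ fun k _ => (integrable_term k).const_mul _]
        refine Finset.sum_congr rfl fun k _ => ?_
        rw [integral_const_mul, mul_right_comm]
        rfl

/-- `|1 + e^{ix}|² = 4 cos² (x / 2)`, whose powers are, up to normalization, the de la
Vallée-Poussin kernels. -/
def dlvpWeight (x : 𝕋) : ℝ := ‖1 + fourier 1 x‖ ^ 2

theorem continuous_dlvpWeight : Continuous dlvpWeight := by
  unfold dlvpWeight
  fun_prop

theorem dlvpWeight_nonneg (x : 𝕋) : 0 ≤ dlvpWeight x := sq_nonneg _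

theorem dlvpWeight_zero : dlvpWeight 0 = 4 := by
  norm_num [dlvpWeight, fourier_apply]

theorem dlvpWeight_lt {x : 𝕋} (hx : x ≠ 0) : dlvpWeight x < dlvpWeight 0 := by
  have norm_fourier : ‖fourier 1 x‖ = 1 := norm_fourier_apply 1 x
  have fourier_ne : 1 ≠ fourier 1 x := fun h =>
    hx <| AddCircle.injective_toCircle Real.two_pi_pos.ne' <| Circle.ext <| by
      rw [← fourier_one, ← h, AddCircle.toCircle_zero, Circle.coe_one]
  have not_sameRay : ¬SameRay ℝ 1 (fourier 1 x) :=
    (sameRay_iff_of_norm_eq (norm_one.trans norm_fourier.symm)).not.mpr fourier_ne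
  have norm_lt : ‖1 + fourier 1 x‖ < 2 := by
    have triangle := norm_add_lt_of_not_sameRay not_sameRay
    rwa [norm_one, norm_fourier, one_add_one_eq_two] at triangle
  rw [dlvpWeight_zero, dlvpWeight]
  nlinarith [norm_nonneg (1 + fourier 1 x)]

theorem integral_dlvpWeight_pow_pos (n : ℕ) : 0 < ∫ x, dlvpWeight x ^ n ∂μ :=
  (continuous_dlvpWeight.pow n).integral_pos_of_hasCompactSupport_nonneg_nonzero
    (HasCompactSupport.of_compactSpace _) (fun x => pow_nonneg (dlvpWeight_nonneg x) n)
    (x := 0) (by rw [dlvpWeight_zero]; positivity)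

/-- The `n`-th de la Vallée-Poussin kernel: the `n`-th power of `dlvpWeight`, normalized to have
integral one. -/
def dlvpKernel (n : ℕ) (x : 𝕋) : ℝ := (∫ y, dlvpWeight y ^ n ∂μ)⁻¹ * dlvpWeight x ^ n

theorem integrable_dlvpKernel (n : ℕ) : Integrable (dlvpKernel n) μ :=
  ((continuous_dlvpWeight.pow n).const_mul _).integrable_of_hasCompactSupport
    (HasCompactSupport.of_compactSpace _)

theorem lintegral_enorm_dlvpKernel (n : ℕ) : ∫⁻ x, ‖dlvpKernel n x‖ₑ ∂μ = 1 := by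
  have kernel_nonneg (x) : 0 ≤ dlvpKernel n x :=
    mul_nonneg (inv_nonneg.mpr (integral_dlvpWeight_pow_pos n).le)
      (pow_nonneg (dlvpWeight_nonneg x) n)
  rw [← ofReal_integral_norm_eq_lintegral_enorm (integrable_dlvpKernel n)]
  simp only [Real.norm_of_nonneg (kernel_nonneg _)]
  simp only [dlvpKernel, integral_const_mul]
  rw [inv_mul_cancel₀ (integral_dlvpWeight_pow_pos n).ne', ENNReal.ofReal_one]

theorem tendsto_integral_dlvpKernel_smul {F : 𝕋 → ℂ} (hF : Continuous F) :
    Tendsto (fun n => ∫ x, dlvpKernel n x • F x ∂μ) atTop (𝓝 (F 0)) := by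
  have peak := tendsto_setIntegral_pow_smul_of_unique_maximum_of_isCompact_of_continuousOn
    (μ := μ) isCompact_univ continuous_dlvpWeight.continuousOn (fun x _ hx => dlvpWeight_lt hx)
    (fun x _ => dlvpWeight_nonneg x) (by simp [dlvpWeight_zero]) (by simp) hF.continuousOn
  simpa only [setIntegral_univ, dlvpKernel, mul_smul, integral_smul] using peak

theorem exists_mem_fourierSubalgebra_eq_dlvpKernel (n : ℕ) :
    ∃ q ∈ fourierSubalgebra, ∀ x : 𝕋, q x = dlvpKernel n x := by
  let u : C(𝕋, ℂ) := 1 + fourier 1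
  let c : ℂ := ((∫ y, dlvpWeight y ^ n ∂μ)⁻¹ : ℝ)
  have u_mem : u ∈ fourierSubalgebra :=
    add_mem (one_mem _) (Algebra.subset_adjoin (Set.mem_range_self 1))
  refine ⟨c • (star u * u) ^ n,
    SMulMemClass.smul_mem c (pow_mem (mul_mem (star_mem u_mem) u_mem) n), fun x => ?_⟩
  have conj_mul_self : conj (u x) * u x = dlvpWeight x := by
    rw [dlvpWeight, Complex.ofReal_pow]
    exact Complex.conj_mul' (u x)
  calc (c • (star u * u) ^ n) x = c * (conj (u x) * u x) ^ n := rfl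
    _ = dlvpKernel n x := by
      rw [conj_mul_self, dlvpKernel, Complex.ofReal_mul, Complex.ofReal_pow]

end Polynomials

section TranslationInvariance

/-- Invariance of the norm functional `N` under the rotations of the circle. -/
def TranslInvN (N : NormFn) : Prop :=
  ∀ f (y : 𝕋), AEStronglyMeasurable f μ → N (fun t => f (t + y)) = N f

theorem RearrInvN.translInvN {N : NormFn} (hN : RearrInvN N) : TranslInvN N := by
  intro f y hf
  have translation : MeasurePreserving (fun t : 𝕋 => t + y) μ μ := measurePreserving_add_right μ y
  refine hN _ _ (hf.comp_measurePreserving translation) hf fun lam _ => ?_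
  have superlevel : NullMeasurableSet {t | lam < ‖f t‖} μ :=
    nullMeasurableSet_lt aemeasurable_const hf.norm.aemeasurable
  simpa only [Set.preimage_ofPred_eq] using translation.measure_preimage superlevel

namespace TranslInvN

variable {N : NormFn} {f g : 𝕋 → ℂ} {φ : 𝕋 → ℝ}

theorem kdualN_convolution_le (hN : TranslInvN N) (hφ : AEStronglyMeasurable φ μ)
    (hg : AEStronglyMeasurable g μ) :
    kdualN N (φ ⋆[lsmul ℝ ℝ, μ] g) ≤ (∫⁻ y, ‖φ y‖ₑ ∂μ) * kdualN N g := by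
  refine kdualN_le_iff.mpr fun h hh hhN => ?_
  have translate_le (y : 𝕋) : ∫⁻ x, ‖h (x + y) * g x‖ₑ ∂μ ≤ kdualN N g :=
    kdualN_le_iff.mp le_rfl _ (hh.comp_measurePreserving (measurePreserving_add_right μ y))
      ((hN h y hh).trans_le hhN)
  calc ∫⁻ x, ‖h x * (φ ⋆[lsmul ℝ ℝ, μ] g) x‖ₑ ∂μ
      ≤ ∫⁻ x, ∫⁻ y, ‖h x * φ y • g (x - y)‖ₑ ∂μ ∂μ := lintegral_mono fun x => by
        simp only [convolution_def, lsmul_apply, ← integral_const_mul]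
        exact enorm_integral_le_lintegral_enorm _
    _ ≤ (∫⁻ y, ‖φ y‖ₑ ∂μ) * kdualN N g :=
        lintegral_lintegral_enorm_mul_smul_sub_le hφ hh hg translate_le

theorem enorm_integral_mul_conj_le_iSup_trigPoly (hN : TranslInvN N) (hf : Integrable f μ)
    (hg : AEStronglyMeasurable g μ) {C : ℝ} (hC : ∀ t, ‖g t‖ ≤ C) (hgN : kdualN N g ≤ 1) :
    ‖∫ t, f t * conj (g t) ∂μ‖ₑ ≤
      ⨆ p : {p : 𝕋 → ℂ // IsTrigPoly p ∧ kdualN N p ≤ 1}, ‖∫ t, f t * conj (p.1 t) ∂μ‖ₑ := by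
  have g_memLp : MemLp g ⊤ μ := memLp_top_of_bound hg C (.of_forall hC)
  let p (n : ℕ) : 𝕋 → ℂ := dlvpKernel n ⋆[lsmul ℝ ℝ, μ] g
  have p_trigPoly (n) : IsTrigPoly (p n) := by
    obtain ⟨q, hq, hqn⟩ := exists_mem_fourierSubalgebra_eq_dlvpKernel n
    exact isTrigPoly_convolution hq hqn (g_memLp.integrable le_top)
  have p_ball (n) : kdualN N (p n) ≤ 1 :=
    (hN.kdualN_convolution_le (integrable_dlvpKernel n).1 hg).trans <| by
      rwa [lintegral_enorm_dlvpKernel, one_mul]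
  have pairing_tendsto :
      Tendsto (fun n => ∫ t, f t * conj (p n t) ∂μ) atTop (𝓝 (∫ t, f t * conj (g t) ∂μ)) := by
    have : Fact ((1 : ℝ≥0∞) ≠ ⊤) := ⟨ENNReal.one_ne_top⟩
    have corr_continuous := continuous_crossCorr (memLp_one_iff_integrable.mpr hf) g_memLp
    simpa only [p, integral_mul_conj_convolution (integrable_dlvpKernel _) hf hg hC,
      crossCorr_zero] using tendsto_integral_dlvpKernel_smul corr_continuous
  exact le_of_tendsto' pairing_tendsto.enorm fun n =>
    le_iSup_of_le ⟨p n, p_trigPoly n, p_ball n⟩ le_rfl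

end TranslInvN

namespace BFS

variable {X : BFS} {f : 𝕋 → ℂ}

theorem exists_kdualN_le_one_lintegral_enorm_ne_zero (X : BFS) :
    ∃ g, AEStronglyMeasurable g μ ∧ kdualN X.N g ≤ 1 ∧ ∫⁻ t, ‖g t‖ₑ ∂μ ≠ 0 := by
  by_contra! lintegral_eq_zero
  have N_one : X.N (fun _ => 1) = 0 := by
    rw [← kdualN_kdualN_eq ⟨aestronglyMeasurable_const, X.const_finite⟩, ← nonpos_iff_eq_zero]
    refine kdualN_le_iff.mpr fun g hg hgN => ?_
    simpa only [mul_one] using (lintegral_eq_zero g hg hgN).le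
  obtain ⟨_, one_eq_zero⟩ := (X.norm_eq_zero _ aestronglyMeasurable_const N_one).exists
  exact one_ne_zero one_eq_zero

theorem integrable_of_memN (htr : TranslInvN X.N) (hf : MemN X.N f) : Integrable f μ := by
  obtain ⟨g, hg, hgN, hg_ne⟩ := X.exists_kdualN_le_one_lintegral_enorm_ne_zero
  have translate_le (y : 𝕋) : ∫⁻ x, ‖f (x + y) * g x‖ₑ ∂μ ≤ X.N f :=
    (lintegral_enorm_mul_le_N hgN
      (hf.1.comp_measurePreserving (measurePreserving_add_right μ y))).trans_eq (htr f y hf.1)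
  have product_lt_top :=
    (lintegral_enorm_mul_lintegral_enorm_le hf.1 hg translate_le).trans_lt hf.2
  exact ⟨hf.1, ENNReal.lt_top_of_mul_ne_top_left product_lt_top.ne hg_ne⟩

end BFS

end TranslationInvariance

theorem norm_via_poly_duality_general (X : BFS) (htr : TranslInvN X.N) (f : 𝕋 → ℂ)
    (hf : MemN X.N f) :
    X.N f = ⨆ p : {p : 𝕋 → ℂ // IsTrigPoly p ∧ kdualN X.N p ≤ 1},
      (‖∫ t, f t * (starRingEnd ℂ) (p.1 t) ∂μ‖₊ : ℝ≥0∞) := by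
  have f_integrable := BFS.integrable_of_memN htr hf
  refine le_antisymm ?_ (iSup_le fun p => ?_)
  · rw [← BFS.kdualN_kdualN_eq hf]
    refine kdualN_le_iff.mpr fun g hg hgN =>
      lintegral_enorm_mul_le_of_forall_bounded hg f_integrable ?_
    rintro w hw hwg ⟨C, hC⟩
    exact htr.enorm_integral_mul_conj_le_iSup_trigPoly f_integrable hw hC
      ((kdualN_mono hwg).trans hgN)
  · exact (enorm_integral_mul_conj_le f p.1).trans (BFS.lintegral_enorm_mul_le_N p.2.2 hf.1)

/-- In a rearrangement-invariant Banach function space `X` over `𝕋`, the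
norm is attained by dualizing against trigonometric polynomials in the unit ball of the
Köthe dual `X'`. -/
theorem norm_via_poly_duality (X : BFS) (hri : RearrInvN X.N) (f : 𝕋 → ℂ)
    (hf : MemN X.N f) :
    X.N f = ⨆ p : {p : 𝕋 → ℂ // IsTrigPoly p ∧ kdualN X.N p ≤ 1},
      (‖∫ t, f t * (starRingEnd ℂ) (p.1 t) ∂μ‖₊ : ℝ≥0∞) :=
  norm_via_poly_duality_general X hri.translInvN f hf

end
end

section
/- Let X, Y be rearrangement-invariant Banach function spaces over 𝕋, with X separable. If A : X → Y is a bounded linear operator and there exists a sequence (a_n)_{n∈ℤ} of complex numbers such that ⟨Aχ_j, χ_k⟩ = a_{k−j} for all j, k ∈ ℤ (where χ_n(t) = t^n), then there exists a ∈ M(X,Y) with â(n) = a_n for all n, and A is the multiplication operator Af = af. -/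
open MeasureTheory Filter Topology ComplexConjugate
open scoped ENNReal

noncomputable section

/-!
Put `m = A χ₀`. The functions `A χⱼ` and `m χⱼ` lie in `Y ⊆ L¹` and have the same Fourier
coefficients, so they agree almost everywhere, and `A` is multiplication by `m` on trigonometric
polynomials. These are dense in `X` by order continuity, and norm convergence in a Banach function
space implies almost everywhere convergence along a subsequence, so `A f = m f` for all `f ∈ X`.

The inclusion `Y ⊆ L¹` comes from rearrangement invariance. For bounded `f`, averaging `|f|` along
the doubling map does not increase its norm, while the averages converge to `∫ |f|` by ergodicity,
so the semi-Fatou property gives `‖f‖₁ ‖1‖_Y ≤ ‖f‖_Y`; truncation extends this to all `f`.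
-/

section FourierCoefficients

variable {T : ℝ} [Fact (0 < T)] {E : Type*} [NormedAddCommGroup E] [NormedSpace ℂ E]

lemma fourierCoeff_fourier_smul (f : AddCircle T → E) (j k : ℤ) :
    fourierCoeff (fun t => fourier j t • f t) k = fourierCoeff f (k - j) := by
  simp only [fourierCoeff, smul_smul, ← fourier_add]
  ring_nf

lemma integral_smul_eq_zero_of_fourierCoeff_eq_zero {f : AddCircle T → E}
    (hf : Integrable f AddCircle.haarAddCircle) (h : ∀ n, fourierCoeff f n = 0)
    (g : C(AddCircle T, ℂ)) : ∫ t, g t • f t ∂AddCircle.haarAddCircle = 0 := by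
  have integrable_smul (g : C(AddCircle T, ℂ)) :
      Integrable (fun t => g t • f t) AddCircle.haarAddCircle :=
    hf.bdd_smul ‖g‖ g.continuous.aestronglyMeasurable (.of_forall g.norm_coe_le_norm)
  let L : C(AddCircle T, ℂ) →ₗ[ℂ] E :=
    { toFun := fun g => ∫ t, g t • f t ∂AddCircle.haarAddCircle
      map_add' := fun g₁ g₂ => by
        simp only [ContinuousMap.add_apply, add_smul]
        exact integral_add (integrable_smul g₁) (integrable_smul g₂)
      map_smul' := fun c g => by
        simp only [ContinuousMap.smul_apply, smul_assoc, RingHom.id_apply, integral_smul] }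
  have L_bound (g : C(AddCircle T, ℂ)) :
      ‖L g‖ ≤ (∫ t, ‖f t‖ ∂AddCircle.haarAddCircle) * ‖g‖ := by
    rw [mul_comm, ← integral_const_mul]
    refine norm_integral_le_of_norm_le (hf.norm.const_mul _) (.of_forall fun t => ?_)
    exact (norm_smul_le _ _).trans (by gcongr; exact g.norm_coe_le_norm t)
  have L_fourier : Set.EqOn (L.mkContinuous _ L_bound) (0 : C(AddCircle T, ℂ) →L[ℂ] E)
      (Set.range fourier) := by
    rintro - ⟨n, rfl⟩
    have : L (fourier n) = fourierCoeff f (-n) := by simp only [L, fourierCoeff, neg_neg]; rfl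
    exact this.trans (h (-n))
  exact DFunLike.congr_fun (ContinuousLinearMap.ext_on
    (Submodule.dense_iff_topologicalClosure_eq_top.2 span_fourier_closure_eq_top) L_fourier) g

variable [CompleteSpace E]

lemma ae_eq_zero_of_fourierCoeff_eq_zero {f : AddCircle T → E}
    (hf : Integrable f AddCircle.haarAddCircle) (h : ∀ n, fourierCoeff f n = 0) :
    f =ᵐ[AddCircle.haarAddCircle] 0 := by
  refine ae_eq_zero_of_forall_setIntegral_isClosed_eq_zero hf fun s hs => ?_
  let φ (n : ℕ) : C(AddCircle T, ℂ) := ⟨fun t => ((hs.apprSeq n t : ℝ) : ℂ), by fun_prop⟩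
  have norm_φ_le (n : ℕ) (t : AddCircle T) : ‖φ n t‖ ≤ 1 := by
    simpa [φ] using HasOuterApproxClosed.apprSeq_apply_le_one hs n t
  have tendsto_φ (t : AddCircle T) :
      Tendsto (fun n => φ n t • f t) atTop (𝓝 (s.indicator f t)) := by
    have : (((s.indicator (fun _ => 1) t : NNReal) : ℝ) : ℂ) • f t = s.indicator f t := by
      by_cases ht : t ∈ s <;> simp [ht]
    rw [← this]
    have := tendsto_pi_nhds.1 (HasOuterApproxClosed.tendsto_apprSeq hs) t
    exact ((Complex.continuous_ofReal.tendsto _).comp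
      ((NNReal.continuous_coe.tendsto _).comp this)).smul_const (f t)
  have tendsto_integral : Tendsto (fun n => ∫ t, φ n t • f t ∂AddCircle.haarAddCircle) atTop
      (𝓝 (∫ t, s.indicator f t ∂AddCircle.haarAddCircle)) := by
    refine tendsto_integral_of_dominated_convergence (fun t => ‖f t‖)
      (fun n => (φ n).continuous.aestronglyMeasurable.smul hf.1) hf.norm
      (fun n => .of_forall fun t => ?_) (.of_forall tendsto_φ)
    exact (norm_smul_le _ _).trans (mul_le_of_le_one_left (norm_nonneg _) (norm_φ_le n t))
  rw [integral_indicator hs.measurableSet] at tendsto_integral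
  simp only [integral_smul_eq_zero_of_fourierCoeff_eq_zero hf h] at tendsto_integral
  exact tendsto_nhds_unique tendsto_integral tendsto_const_nhds

lemma ae_eq_of_fourierCoeff_eq {f g : AddCircle T → E}
    (hf : Integrable f AddCircle.haarAddCircle) (hg : Integrable g AddCircle.haarAddCircle)
    (h : ∀ n, fourierCoeff f n = fourierCoeff g n) : f =ᵐ[AddCircle.haarAddCircle] g := by
  refine (sub_ae_eq_zero _ _).1 (ae_eq_zero_of_fourierCoeff_eq_zero (hf.sub hg) fun n => ?_)
  simp only [fourierCoeff, Pi.sub_apply, smul_sub]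
  rw [integral_sub (hf.fourier_smul _) (hg.fourier_smul _)]
  exact sub_eq_zero.2 (h n)

end FourierCoefficients

section MeanErgodic

variable {α : Type*} [MeasurableSpace α] {ν : Measure α} {φ : α → α}
  (𝕜 : Type*) [RCLike 𝕜]

/-- The Koopman operator `h ↦ h ∘ φ` on `L²(ν)` of a measure-preserving map `φ`. -/
def koopman (hφ : MeasurePreserving φ ν ν) : Lp 𝕜 2 ν →L[𝕜] Lp 𝕜 2 ν :=
  (Lp.compMeasurePreservingₗᵢ 𝕜 φ hφ).toContinuousLinearMap

lemma norm_koopman_le_one (hφ : MeasurePreserving φ ν ν) : ‖koopman 𝕜 hφ‖ ≤ 1 :=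
  LinearIsometry.norm_toContinuousLinearMap_le _

lemma aestronglyMeasurable_birkhoffAverage {E : Type*} [NormedAddCommGroup E] [NormedSpace 𝕜 E]
    (hφ : MeasurePreserving φ ν ν) {f : α → E} (hf : AEStronglyMeasurable f ν) (n : ℕ) :
    AEStronglyMeasurable (birkhoffAverage 𝕜 φ f n) ν := by
  unfold birkhoffAverage birkhoffSum
  exact AEStronglyMeasurable.const_smul (Finset.aestronglyMeasurable_fun_sum _ fun k _ =>
    hf.comp_measurePreserving (hφ.iterate k)) _

variable {𝕜}

lemma koopman_iterate_ae_eq (hφ : MeasurePreserving φ ν ν) (h : Lp 𝕜 2 ν) (n : ℕ) :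
    ((koopman 𝕜 hφ)^[n] h : Lp 𝕜 2 ν) =ᵐ[ν] h ∘ φ^[n] := by
  have : (koopman 𝕜 hφ)^[n] = Lp.compMeasurePreserving φ^[n] (hφ.iterate n) :=
    Lp.compMeasurePreserving_iterate hφ n
  rw [this]
  exact Lp.coeFn_compMeasurePreserving h (hφ.iterate n)

lemma birkhoffAverage_koopman_ae_eq (hφ : MeasurePreserving φ ν ν) (h : Lp 𝕜 2 ν) (n : ℕ) :
    (birkhoffAverage 𝕜 (koopman 𝕜 hφ) id n h : Lp 𝕜 2 ν) =ᵐ[ν]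
      birkhoffAverage 𝕜 φ h n := by
  simp only [birkhoffAverage, birkhoffSum, id]
  filter_upwards [Lp.coeFn_smul (n : 𝕜)⁻¹ (∑ k ∈ Finset.range n, (koopman 𝕜 hφ)^[k] h),
    Lp.coeFn_fun_finsetSum (Finset.range n) (fun k => (koopman 𝕜 hφ)^[k] h),
    ae_all_iff.2 (koopman_iterate_ae_eq hφ h)] with t h_smul h_sum h_iterate
  simp only [h_smul, Pi.smul_apply, h_sum, h_iterate, Function.comp_apply, birkhoffAverage,
    birkhoffSum]

variable [IsProbabilityMeasure ν]

lemma koopman_const (hφ : MeasurePreserving φ ν ν) (c : 𝕜) :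
    koopman 𝕜 hφ (Lp.const 2 ν c) = Lp.const 2 ν c := rfl

lemma inner_Lp_const_one (h : Lp 𝕜 2 ν) : inner 𝕜 (Lp.const 2 ν (1 : 𝕜)) h = ∫ t, h t ∂ν := by
  rw [← indicatorConstLp_univ, L2.inner_indicatorConstLp_one, setIntegral_univ]

lemma ae_eq_integral_of_koopman_eq (hφ : Ergodic φ ν) {h : Lp 𝕜 2 ν}
    (h_fixed : koopman 𝕜 hφ.toMeasurePreserving h = h) : h =ᵐ[ν] fun _ => ∫ t, h t ∂ν := by
  have h_comp : h ∘ φ =ᵐ[ν] h := by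
    simpa only [Function.iterate_one, h_fixed] using
      (koopman_iterate_ae_eq hφ.toMeasurePreserving h 1).symm
  obtain ⟨c, hc⟩ := hφ.quasiErgodic.ae_eq_const_of_ae_eq_comp_ae (Lp.aestronglyMeasurable h) h_comp
  rw [integral_congr_ae hc]
  simp only [Function.const_apply, integral_const, probReal_univ, one_smul]
  exact hc

lemma orthogonalProjectionOnto_eqLocus_koopman_ae_eq (hφ : Ergodic φ ν) (h : Lp 𝕜 2 ν) :
    (((koopman 𝕜 hφ.toMeasurePreserving).eqLocus
      (1 : Lp 𝕜 2 ν →L[𝕜] Lp 𝕜 2 ν)).orthogonalProjectionOnto h : Lp 𝕜 2 ν) =ᵐ[ν]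
      fun _ => ∫ t, h t ∂ν := by
  set K := (koopman 𝕜 hφ.toMeasurePreserving).eqLocus (1 : Lp 𝕜 2 ν →L[𝕜] Lp 𝕜 2 ν)
  have integral_eq : ∫ t, (K.orthogonalProjectionOnto h : Lp 𝕜 2 ν) t ∂ν = ∫ t, h t ∂ν := by
    rw [← inner_Lp_const_one, ← inner_Lp_const_one]
    exact K.inner_orthogonalProjectionOnto_eq_of_mem_left
      ⟨_, koopman_const hφ.toMeasurePreserving 1⟩ h
  rw [← integral_eq]
  exact ae_eq_integral_of_koopman_eq hφ (K.orthogonalProjectionOnto h).2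

theorem tendsto_eLpNorm_birkhoffAverage_sub_integral (hφ : Ergodic φ ν) {h : α → 𝕜}
    (hh : MemLp h 2 ν) :
    Tendsto (fun n => eLpNorm (birkhoffAverage 𝕜 φ h n - fun _ => ∫ t, h t ∂ν) 2 ν) atTop
      (𝓝 0) := by
  have lp_tendsto := (Lp.tendsto_Lp_iff_tendsto_eLpNorm' _ _).1
    ((koopman 𝕜 hφ.toMeasurePreserving).tendsto_birkhoffAverage_orthogonalProjection
      (norm_koopman_le_one 𝕜 _) (hh.toLp h))
  refine lp_tendsto.congr fun n => eLpNorm_congr_ae (.sub ?_ ?_)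
  · exact (birkhoffAverage_koopman_ae_eq hφ.toMeasurePreserving _ n).trans
      (hφ.quasiMeasurePreserving.birkhoffAverage_ae_eq_of_ae_eq 𝕜 hh.coeFn_toLp n)
  · rw [← integral_congr_ae hh.coeFn_toLp]
    exact orthogonalProjectionOnto_eqLocus_koopman_ae_eq hφ _

end MeanErgodic

section RadialRetraction

variable {E : Type*} [NormedAddCommGroup E] [NormedSpace ℝ E] {r : ℝ}

/-- The radial retraction of a normed space onto its closed ball of radius `r` about `0`. It serves
as a continuous truncation of vector-valued functions. -/
def radialRetraction (r : ℝ) (x : E) : E := (r / max r ‖x‖) • x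

lemma continuous_radialRetraction (hr : 0 < r) : Continuous (radialRetraction r : E → E) :=
  (continuous_const.div (by fun_prop) fun _ => (lt_max_of_lt_left hr).ne').smul continuous_id

lemma norm_radialRetraction (hr : 0 ≤ r) (x : E) :
    ‖radialRetraction r x‖ = r / max r ‖x‖ * ‖x‖ := by
  rw [radialRetraction, norm_smul, Real.norm_of_nonneg (by positivity)]

lemma norm_radialRetraction_le (hr : 0 ≤ r) (x : E) : ‖radialRetraction r x‖ ≤ r := by
  rw [norm_radialRetraction hr, div_mul_eq_mul_div, mul_div_assoc]
  exact mul_le_of_le_one_right hr (div_le_one_of_le₀ (le_max_right _ _) (le_max_of_le_left hr))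

lemma norm_radialRetraction_le_norm (hr : 0 ≤ r) (x : E) : ‖radialRetraction r x‖ ≤ ‖x‖ := by
  rw [norm_radialRetraction hr]
  exact mul_le_of_le_one_left (norm_nonneg _)
    (div_le_one_of_le₀ (le_max_left _ _) (le_max_of_le_left hr))

lemma radialRetraction_of_norm_le (hr : 0 < r) {x : E} (hx : ‖x‖ ≤ r) :
    radialRetraction r x = x := by
  rw [radialRetraction, max_eq_left hx, div_self hr.ne', one_smul]

lemma tendsto_radialRetraction (x : E) :
    Tendsto (fun n : ℕ => radialRetraction (n + 1) x) atTop (𝓝 x) := by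
  refine tendsto_const_nhds.congr' ?_
  filter_upwards [eventually_ge_atTop ⌈‖x‖⌉₊] with n hn
  have : ‖x‖ ≤ n + 1 := (Nat.ceil_le.1 hn).trans (by linarith)
  exact (radialRetraction_of_norm_le (by positivity) this).symm

end RadialRetraction

section ContinuousApproximation

variable {α E : Type*} [TopologicalSpace α] [NormalSpace α] [MeasurableSpace α] [BorelSpace α]
  {ν : Measure α} [ν.WeaklyRegular] [NormedAddCommGroup E] [NormedSpace ℝ E]

lemma exists_continuousMap_tendsto_ae_of_integrable {f : α → E} (hf : Integrable f ν) :
    ∃ g : ℕ → C(α, E), ∀ᵐ t ∂ν, Tendsto (fun n => g n t) atTop (𝓝 (f t)) := by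
  have inv_ne_zero (n : ℕ) : ((n : ℝ≥0∞) + 1)⁻¹ ≠ 0 := by simp
  choose g g_close g_memLp using fun n => (memLp_one_iff_integrable.2
    hf).exists_boundedContinuous_eLpNorm_sub_le ENNReal.one_ne_top (inv_ne_zero n)
  have tendsto_eLpNorm : Tendsto (fun n => eLpNorm (⇑(g n) - f) 1 ν) atTop (𝓝 0) := by
    refine tendsto_of_tendsto_of_tendsto_of_le_of_le tendsto_const_nhds ?_ (fun _ => zero_le)
      fun n => (eLpNorm_sub_comm _ _ _ _).trans_le (g_close n)
    simpa only [Nat.cast_succ] using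
      (tendsto_add_atTop_iff_nat 1).2 ENNReal.tendsto_inv_nat_nhds_zero
  obtain ⟨ns, -, hns⟩ := (tendstoInMeasure_of_tendsto_eLpNorm one_ne_zero
    (fun n => (g_memLp n).1) hf.1 tendsto_eLpNorm).exists_seq_tendsto_ae
  exact ⟨fun i => (g (ns i)).toContinuousMap, hns⟩

lemma exists_continuousMap_norm_le_tendsto_ae [IsFiniteMeasure ν] {f : α → E}
    (hf : AEStronglyMeasurable f ν) {r : ℝ} (hr : 0 < r) (hf_le : ∀ t, ‖f t‖ ≤ r) :
    ∃ g : ℕ → C(α, E), (∀ n t, ‖g n t‖ ≤ r) ∧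
      ∀ᵐ t ∂ν, Tendsto (fun n => g n t) atTop (𝓝 (f t)) := by
  obtain ⟨g, hg⟩ := exists_continuousMap_tendsto_ae_of_integrable
    (Integrable.of_bound hf r (.of_forall hf_le))
  refine ⟨fun n => ⟨fun t => radialRetraction r (g n t),
    (continuous_radialRetraction hr).comp (g n).continuous⟩,
    fun n t => norm_radialRetraction_le hr.le _, ?_⟩
  filter_upwards [hg] with t ht
  rw [← radialRetraction_of_norm_le hr (hf_le t)]
  exact ((continuous_radialRetraction hr).tendsto _).comp ht

end ContinuousApproximation

section BanachFunctionSpace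

instance inst_s6 : IsProbabilityMeasure μ :=
  inferInstanceAs (IsProbabilityMeasure AddCircle.haarAddCircle)

namespace BFS

variable (X : BFS)

lemma N_zero : X.N (fun _ => 0) = 0 := by
  simpa using X.smul_eq 0 (fun _ => 0)

lemma N_one_ne_zero : X.N (fun _ => 1) ≠ 0 := fun h => by
  obtain ⟨_, ht⟩ := (X.norm_eq_zero _ aestronglyMeasurable_const h).exists
  exact one_ne_zero ht

lemma N_const (c : ℂ) : X.N (fun _ => c) = ‖c‖ₑ * X.N (fun _ => 1) := by
  simpa only [mul_one, ← enorm_eq_nnnorm] using X.smul_eq c (fun _ => 1)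

lemma N_sum_le (f : ℕ → 𝕋 → ℂ) (n : ℕ) :
    X.N (fun t => ∑ k ∈ Finset.range n, f k t) ≤ ∑ k ∈ Finset.range n, X.N (f k) := by
  induction n with
  | zero => simp only [Finset.range_zero, Finset.sum_empty, X.N_zero, le_refl]
  | succ n ih =>
    simp only [Finset.sum_range_succ]
    exact (X.add_le (fun t => ∑ k ∈ Finset.range n, f k t) (f n)).trans (by gcongr)

variable {X}

lemma memN_const (c : ℂ) : MemN X.N (fun _ => c) :=
  ⟨aestronglyMeasurable_const, by
    rw [X.N_const]; exact ENNReal.mul_lt_top enorm_lt_top X.const_finite⟩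

lemma memN_of_norm_le {f g : 𝕋 → ℂ} (hf : MemN X.N f) (hg : AEStronglyMeasurable g μ)
    (h : ∀ᵐ t ∂μ, ‖g t‖ ≤ ‖f t‖) : MemN X.N g :=
  ⟨hg, (X.ideal f g hg h).trans_lt hf.2⟩

lemma memN_continuousMap (g : C(𝕋, ℂ)) : MemN X.N g :=
  memN_of_norm_le (memN_const (‖g‖ : ℂ)) g.continuous.aestronglyMeasurable (.of_forall fun t => by
    simpa only [Complex.norm_of_nonneg (norm_nonneg g)] using g.norm_coe_le_norm t)

lemma memN_add {f g : 𝕋 → ℂ} (hf : MemN X.N f) (hg : MemN X.N g) : MemN X.N (f + g) :=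
  ⟨hf.1.add hg.1, (X.add_le f g).trans_lt (ENNReal.add_lt_top.2 ⟨hf.2, hg.2⟩)⟩

lemma memN_const_mul (c : ℂ) {f : 𝕋 → ℂ} (hf : MemN X.N f) : MemN X.N (fun t => c * f t) :=
  ⟨hf.1.const_mul c, by rw [X.smul_eq]; exact ENNReal.mul_lt_top ENNReal.coe_lt_top hf.2⟩

lemma memN_sub {f g : 𝕋 → ℂ} (hf : MemN X.N f) (hg : MemN X.N g) : MemN X.N (f - g) := by
  simpa [sub_eq_add_neg, Pi.add_def] using memN_add hf (memN_const_mul (-1) hg)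

lemma N_le_of_enorm_le_liminf {F : ℕ → 𝕋 → ℂ} {g : 𝕋 → ℂ} {K : ℝ≥0∞}
    (hF : ∀ n, AEStronglyMeasurable (F n) μ) (hF_le : ∀ n, X.N (F n) ≤ K) (hg : MemN X.N g)
    (h : ∀ᵐ t ∂μ, ‖g t‖ₑ ≤ liminf (fun n => ‖F n t‖ₑ) atTop) : X.N g ≤ K := by
  -- Truncating at `‖g t‖ₑ` makes the supremum over `n` equal to `‖g t‖ₑ`, as semi-Fatou requires.
  let B (n : ℕ) (t : 𝕋) : ℝ≥0∞ := min ‖g t‖ₑ (⨅ i, ‖F (i + n) t‖ₑ)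
  let G (n : ℕ) (t : 𝕋) : ℂ := (B n t).toReal
  have B_ne_top (n : ℕ) (t : 𝕋) : B n t ≠ ⊤ := ((min_le_left _ _).trans_lt enorm_lt_top).ne
  have norm_G (n : ℕ) (t : 𝕋) : ‖G n t‖ = (B n t).toReal :=
    Complex.norm_of_nonneg ENNReal.toReal_nonneg
  have G_meas (n : ℕ) : AEStronglyMeasurable (G n) μ :=
    (Complex.measurable_ofReal.comp_aemeasurable (hg.1.enorm.min
      (.iInf fun i => (hF (i + n)).enorm)).ennreal_toReal).aestronglyMeasurable
  have B_mono (t : 𝕋) : Monotone (B · t) := fun m n hmn => by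
    refine min_le_min_left _ (le_iInf fun i => (iInf_le _ (i + (n - m))).trans_eq ?_)
    rw [add_assoc, Nat.sub_add_cancel hmn]
  have iSup_B {t : 𝕋} (ht : ‖g t‖ₑ ≤ liminf (fun n => ‖F n t‖ₑ) atTop) :
      ⨆ n, B n t = ‖g t‖ₑ := by
    calc ⨆ n, B n t = ‖g t‖ₑ ⊓ ⨆ n, ⨅ i, ‖F (i + n) t‖ₑ := (inf_iSup_eq _ _).symm
      _ = ‖g t‖ₑ := inf_eq_left.2 (ht.trans_eq liminf_eq_iSup_iInf_of_nat')
  rw [X.semiFatou G g G_meas hg.1 ?_ hg.2]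
  · refine iSup_le fun n =>
      (X.ideal (F n) (G n) (G_meas n) (.of_forall fun t => ?_)).trans (hF_le n)
    rw [norm_G, ← toReal_enorm (F n t)]
    have : B n t ≤ ‖F (0 + n) t‖ₑ := (min_le_right _ _).trans (iInf_le _ 0)
    exact ENNReal.toReal_mono enorm_ne_top (by simpa only [zero_add] using this)
  · filter_upwards [h] with t ht
    simp only [norm_G]
    refine ⟨fun m n hmn => ENNReal.toReal_mono (B_ne_top n t) (B_mono t hmn), ?_⟩
    rw [← toReal_enorm (g t), ← iSup_B ht]
    exact (ENNReal.tendsto_toReal (by rw [iSup_B ht]; exact enorm_ne_top)).comp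
      (tendsto_atTop_iSup (B_mono t))

lemma N_le_tsum {h : ℕ → 𝕋 → ℂ} {g : 𝕋 → ℂ} (hh : ∀ n, AEStronglyMeasurable (h n) μ)
    (hg : MemN X.N g) (h_le : ∀ᵐ t ∂μ, ‖g t‖ₑ ≤ ∑' n, ‖h n t‖ₑ) : X.N g ≤ ∑' n, X.N (h n) := by
  have enorm_norm (n : ℕ) (t : 𝕋) : ‖∑ k ∈ Finset.range n, (‖h k t‖ : ℂ)‖ₑ =
      ∑ k ∈ Finset.range n, ‖h k t‖ₑ := by
    rw [← Complex.ofReal_sum, ← ofReal_norm,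
      Complex.norm_of_nonneg (Finset.sum_nonneg fun _ _ => norm_nonneg _),
      ENNReal.ofReal_sum_of_nonneg fun _ _ => norm_nonneg _]
    simp only [ofReal_norm]
  have norm_meas (n : ℕ) : AEStronglyMeasurable (fun t => (‖h n t‖ : ℂ)) μ :=
    Complex.continuous_ofReal.comp_aestronglyMeasurable (hh n).norm
  refine N_le_of_enorm_le_liminf (F := fun n t => ∑ k ∈ Finset.range n, (‖h k t‖ : ℂ))
    (fun n => Finset.aestronglyMeasurable_fun_sum _ fun k _ => norm_meas k) (fun n => ?_) hg ?_
  · calc X.N (fun t => ∑ k ∈ Finset.range n, (‖h k t‖ : ℂ))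
        ≤ ∑ k ∈ Finset.range n, X.N (fun t => (‖h k t‖ : ℂ)) := X.N_sum_le _ n
      _ ≤ ∑ k ∈ Finset.range n, X.N (h k) := Finset.sum_le_sum fun k _ =>
          X.ideal _ _ (norm_meas k) (.of_forall fun t => by simp)
      _ ≤ ∑' k, X.N (h k) := ENNReal.sum_le_tsum _
  · filter_upwards [h_le] with t ht
    simpa only [enorm_norm, (ENNReal.tendsto_nat_tsum fun k => ‖h k t‖ₑ).liminf_eq] using ht

lemma ae_tsum_enorm_ne_top {h : ℕ → 𝕋 → ℂ} (hh : ∀ n, AEStronglyMeasurable (h n) μ)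
    (h_sum : ∑' n, X.N (h n) ≠ ⊤) : ∀ᵐ t ∂μ, ∑' n, ‖h n t‖ₑ ≠ ⊤ := by
  set E := {t | ∑' n, ‖h n t‖ₑ = ⊤}
  have E_meas : NullMeasurableSet E μ :=
    nullMeasurableSet_eq_fun (AEMeasurable.tsum fun n => (hh n).enorm) aemeasurable_const
  have indicator_mem (c : ℂ) : MemN X.N (E.indicator fun _ => c) :=
    memN_of_norm_le (memN_const c) (aestronglyMeasurable_const.indicator₀ E_meas)
      (.of_forall fun t => norm_indicator_le_norm_self _ t)
  have mul_le (n : ℕ) : n * X.N (E.indicator fun _ => 1) ≤ ∑' k, X.N (h k) := by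
    calc n * X.N (E.indicator fun _ => 1) = X.N (E.indicator fun _ => (n : ℂ)) := by
          rw [← ENNReal.coe_natCast, ← Complex.nnnorm_natCast, ← X.smul_eq]
          congr 1 with t
          by_cases ht : t ∈ E <;> simp [ht]
      _ ≤ ∑' k, X.N (h k) := N_le_tsum hh (indicator_mem n) (.of_forall fun t => by
          by_cases ht : t ∈ E
          · simp only [show ∑' n, ‖h n t‖ₑ = ⊤ from ht, le_top]
          · simp only [Set.indicator_of_notMem ht, enorm_zero, zero_le])
  have N_indicator : X.N (E.indicator fun _ => 1) = 0 := by
    by_contra h_ne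
    obtain ⟨n, hn⟩ := ENNReal.exists_nat_mul_gt h_ne h_sum
    exact (mul_le n).not_gt hn
  filter_upwards [X.norm_eq_zero _ (indicator_mem 1).1 N_indicator] with t ht h_top
  simp [E, h_top] at ht

lemma exists_subseq_tendsto_ae {F : ℕ → 𝕋 → ℂ} {f : 𝕋 → ℂ}
    (hF : ∀ n, AEStronglyMeasurable (F n) μ) (hf : AEStronglyMeasurable f μ)
    (h : Tendsto (fun n => X.N (F n - f)) atTop (𝓝 0)) :
    ∃ ns : ℕ → ℕ, StrictMono ns ∧ ∀ᵐ t ∂μ, Tendsto (fun i => F (ns i) t) atTop (𝓝 (f t)) := by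
  have eventually_le (i : ℕ) : ∀ᶠ n in atTop, X.N (F n - f) ≤ (2⁻¹ : ℝ≥0∞) ^ i :=
    h.eventually_le_const (ENNReal.pow_pos (by simp) i)
  obtain ⟨ns, ns_mono, hns⟩ := extraction_forall_of_eventually eventually_le
  refine ⟨ns, ns_mono, ?_⟩
  have sum_ne_top : ∑' i, X.N (F (ns i) - f) ≠ ⊤ :=
    ne_top_of_le_ne_top (by simp [ENNReal.tsum_geometric]) (ENNReal.tsum_le_tsum hns)
  filter_upwards [ae_tsum_enorm_ne_top (fun i => (hF (ns i)).sub hf) sum_ne_top] with t ht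
  rw [tendsto_iff_edist_tendsto_0]
  simpa only [Pi.sub_apply, edist_eq_enorm_sub] using
    ENNReal.tendsto_atTop_zero_of_tsum_ne_top ht

end BFS

end BanachFunctionSpace

section RearrangementInvariant

lemma ergodic_nsmul_haarAddCircle {T : ℝ} [Fact (0 < T)] {n : ℕ} (hn : 1 < n) :
    Ergodic (fun t : AddCircle T => n • t) AddCircle.haarAddCircle := by
  have haar_eq : (AddCircle.haarAddCircle : Measure (AddCircle T)) =
      (ENNReal.ofReal T)⁻¹ • volume := by
    have hT : ENNReal.ofReal T ≠ 0 := (ENNReal.ofReal_pos.2 Fact.out).ne'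
    rw [AddCircle.volume_eq_smul_haarAddCircle, smul_smul,
      ENNReal.inv_mul_cancel hT ENNReal.ofReal_ne_top, one_smul]
  rw [haar_eq]
  exact (AddCircle.ergodic_nsmul hn).smul_measure _

lemma RearrInvN.comp_measurePreserving {N : NormFn} (hN : RearrInvN N) {f : 𝕋 → ℂ}
    (hf : AEStronglyMeasurable f μ) {φ : 𝕋 → 𝕋} (hφ : MeasurePreserving φ μ μ) :
    N (f ∘ φ) = N f :=
  hN _ _ (hf.comp_measurePreserving hφ) hf fun _ _ =>
    hφ.measure_preimage (nullMeasurableSet_lt aemeasurable_const hf.norm.aemeasurable)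

namespace BFS

variable {Y : BFS}

lemma N_birkhoffAverage_le (hY : RearrInvN Y.N) {f : 𝕋 → ℂ} (hf : AEStronglyMeasurable f μ)
    {φ : 𝕋 → 𝕋} (hφ : MeasurePreserving φ μ μ) (n : ℕ) :
    Y.N (birkhoffAverage ℂ φ f n) ≤ Y.N f := by
  calc Y.N (birkhoffAverage ℂ φ f n)
      = (‖(n : ℂ)⁻¹‖₊ : ℝ≥0∞) * Y.N (fun t => ∑ k ∈ Finset.range n, (f ∘ φ^[k]) t) :=
        Y.smul_eq _ _
    _ ≤ (‖(n : ℂ)⁻¹‖₊ : ℝ≥0∞) * (n * Y.N f) := by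
        gcongr
        refine (Y.N_sum_le _ n).trans_eq ?_
        simp only [hY.comp_measurePreserving hf (hφ.iterate _), Finset.sum_const,
          Finset.card_range, nsmul_eq_mul]
    _ ≤ Y.N f := by
        rw [← mul_assoc, ← ENNReal.coe_natCast, ← Complex.nnnorm_natCast, ← ENNReal.coe_mul,
          ← nnnorm_mul]
        refine mul_le_of_le_one_left zero_le ?_
        rcases eq_or_ne n 0 with rfl | hn
        · simp
        · simp [hn]

lemma enorm_integral_mul_N_one_le (hY : RearrInvN Y.N) {h : 𝕋 → ℂ} (hh : MemLp h 2 μ) :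
    ‖∫ t, h t ∂μ‖ₑ * Y.N (fun _ => 1) ≤ Y.N h := by
  have ergodic_doubling : Ergodic (fun t : 𝕋 => 2 • t) μ := ergodic_nsmul_haarAddCircle one_lt_two
  have average_meas := aestronglyMeasurable_birkhoffAverage ℂ
    ergodic_doubling.toMeasurePreserving hh.1
  obtain ⟨ns, -, hns⟩ := (tendstoInMeasure_of_tendsto_eLpNorm two_ne_zero average_meas
    aestronglyMeasurable_const
    (tendsto_eLpNorm_birkhoffAverage_sub_integral ergodic_doubling hh)).exists_seq_tendsto_ae
  rw [← Y.N_const]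
  refine N_le_of_enorm_le_liminf (fun i => average_meas (ns i))
    (fun i => N_birkhoffAverage_le hY hh.1 ergodic_doubling.toMeasurePreserving (ns i))
    (memN_const _) ?_
  filter_upwards [hns] with t ht
  exact ht.enorm.liminf_eq.ge

lemma eLpNorm_one_mul_N_one_le_of_norm_le (hY : RearrInvN Y.N) {f : 𝕋 → ℂ}
    (hf : AEStronglyMeasurable f μ) {r : ℝ} (hf_le : ∀ t, ‖f t‖ ≤ r) :
    eLpNorm f 1 μ * Y.N (fun _ => 1) ≤ Y.N f := by
  have norm_meas : AEStronglyMeasurable (fun t => (‖f t‖ : ℂ)) μ :=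
    Complex.continuous_ofReal.comp_aestronglyMeasurable hf.norm
  have norm_memLp : MemLp (fun t => (‖f t‖ : ℂ)) 2 μ :=
    .of_bound norm_meas r (.of_forall fun t => by simpa using hf_le t)
  calc eLpNorm f 1 μ * Y.N (fun _ => 1)
      = ‖∫ t, (‖f t‖ : ℂ) ∂μ‖ₑ * Y.N (fun _ => 1) := by
        rw [integral_complex_ofReal, ← ofReal_norm,
          Complex.norm_of_nonneg (integral_nonneg fun _ => norm_nonneg _),
          ofReal_integral_norm_eq_lintegral_enorm, eLpNorm_one_eq_lintegral_enorm]
        exact Integrable.of_bound hf r (.of_forall hf_le)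
    _ ≤ Y.N (fun t => (‖f t‖ : ℂ)) := enorm_integral_mul_N_one_le hY norm_memLp
    _ ≤ Y.N f := Y.ideal _ _ norm_meas (.of_forall fun t => by simp)

lemma eLpNorm_one_mul_N_one_le (hY : RearrInvN Y.N) {f : 𝕋 → ℂ}
    (hf : AEStronglyMeasurable f μ) : eLpNorm f 1 μ * Y.N (fun _ => 1) ≤ Y.N f := by
  let F (n : ℕ) (t : 𝕋) : ℂ := radialRetraction (n + 1) (f t)
  have F_meas (n : ℕ) : AEStronglyMeasurable (F n) μ :=
    (continuous_radialRetraction n.cast_add_one_pos).comp_aestronglyMeasurable hf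
  have F_le (n : ℕ) : eLpNorm (F n) 1 μ * Y.N (fun _ => 1) ≤ Y.N f :=
    (eLpNorm_one_mul_N_one_le_of_norm_le hY (F_meas n) fun t =>
      norm_radialRetraction_le n.cast_add_one_pos.le _).trans
      (Y.ideal _ _ (F_meas n) (.of_forall fun t =>
        norm_radialRetraction_le_norm n.cast_add_one_pos.le _))
  rw [← ENNReal.le_div_iff_mul_le (.inl Y.N_one_ne_zero) (.inl Y.const_finite.ne)]
  calc eLpNorm f 1 μ ≤ liminf (fun n => eLpNorm (F n) 1 μ) atTop :=
        Lp.eLpNorm_lim_le_liminf_eLpNorm F_meas f (.of_forall fun t => tendsto_radialRetraction _)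
    _ ≤ Y.N f / Y.N (fun _ => 1) := by
        refine liminf_le_of_frequently_le' (.of_forall fun n => ?_)
        exact (ENNReal.le_div_iff_mul_le (.inl Y.N_one_ne_zero) (.inl Y.const_finite.ne)).2 (F_le n)

lemma integrable_of_memN_s6 (hY : RearrInvN Y.N) {f : 𝕋 → ℂ} (hf : MemN Y.N f) : Integrable f μ := by
  refine memLp_one_iff_integrable.1 ⟨hf.1, ?_⟩
  by_contra h_top
  rw [not_lt, top_le_iff] at h_top
  have := (eLpNorm_one_mul_N_one_le hY hf.1).trans_lt hf.2
  rw [h_top, ENNReal.top_mul Y.N_one_ne_zero] at this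
  exact lt_irrefl _ this

end BFS

end RearrangementInvariant

section TrigonometricApproximation

lemma exists_mem_span_fourier_norm_le_tendsto_ae {T : ℝ} [Fact (0 < T)] {f : AddCircle T → ℂ}
    (hf : AEStronglyMeasurable f AddCircle.haarAddCircle) {r : ℝ} (hr : 0 < r)
    (hf_le : ∀ t, ‖f t‖ ≤ r) :
    ∃ p : ℕ → C(AddCircle T, ℂ), (∀ n, p n ∈ Submodule.span ℂ (Set.range fourier)) ∧
      (∀ n t, ‖p n t‖ ≤ r + 1) ∧
      ∀ᵐ t ∂AddCircle.haarAddCircle, Tendsto (fun n => p n t) atTop (𝓝 (f t)) := by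
  obtain ⟨g, g_le, hg⟩ := exists_continuousMap_norm_le_tendsto_ae hf hr hf_le
  have fourier_dense := Submodule.dense_iff_topologicalClosure_eq_top.2
    (span_fourier_closure_eq_top (T := T))
  choose p p_mem p_close using fun n : ℕ =>
    fourier_dense.exists_dist_lt (g n) (one_div_pos.2 n.cast_add_one_pos)
  have dist_lt (n : ℕ) (t : AddCircle T) : dist (g n t) (p n t) < 1 / (n + 1) :=
    (ContinuousMap.dist_apply_le_dist t).trans_lt (p_close n)
  refine ⟨p, p_mem, fun n t => ?_, ?_⟩
  · have inv_le_one : 1 / ((n : ℝ) + 1) ≤ 1 := div_le_one_of_le₀ (by simp) n.cast_add_one_pos.le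
    have : ‖p n t - g n t‖ ≤ 1 := by
      rw [← dist_eq_norm']
      exact (dist_lt n t).le.trans inv_le_one
    linarith [norm_sub_norm_le (p n t) (g n t), g_le n t]
  · filter_upwards [hg] with t ht
    exact ht.congr_dist (squeeze_zero (fun _ => dist_nonneg) (fun n => (dist_lt n t).le)
      tendsto_one_div_add_atTop_nhds_zero_nat)

namespace OrderContN

variable {X : BFS}

lemma tendsto_N_sub_of_dominated (hX : OrderContN X.N) {F : ℕ → 𝕋 → ℂ} {f G : 𝕋 → ℂ}
    (hG : MemN X.N G) (hF : ∀ n, AEStronglyMeasurable (F n) μ) (hf : AEStronglyMeasurable f μ)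
    (F_le : ∀ n, ∀ᵐ t ∂μ, ‖F n t‖ ≤ ‖G t‖)
    (h : ∀ᵐ t ∂μ, Tendsto (fun n => F n t) atTop (𝓝 (f t))) :
    Tendsto (fun n => X.N (F n - f)) atTop (𝓝 0) := by
  refine (hX _ (BFS.memN_const_mul 2 hG)).2 (fun n => F n - f) (fun n => (hF n).sub hf)
    (fun n => ?_) ?_
  · filter_upwards [ae_all_iff.2 F_le, h] with t ht_le ht
    have f_le : ‖f t‖ ≤ ‖G t‖ := le_of_tendsto' ht.norm ht_le
    calc ‖F n t - f t‖ ≤ ‖F n t‖ + ‖f t‖ := norm_sub_le _ _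
      _ ≤ ‖2 * G t‖ := by
        rw [norm_mul, Complex.norm_ofNat]
        linarith [ht_le n]
  · filter_upwards [h] with t ht
    exact tendsto_iff_norm_sub_tendsto_zero.1 ht

lemma exists_mem_span_fourier_N_sub_lt_of_norm_le (hX : OrderContN X.N) {f : 𝕋 → ℂ}
    (hf : AEStronglyMeasurable f μ) {r : ℝ} (hr : 0 < r) (hf_le : ∀ t, ‖f t‖ ≤ r) {ε : ℝ≥0∞}
    (hε : 0 < ε) :
    ∃ p : C(𝕋, ℂ), p ∈ Submodule.span ℂ (Set.range fourier) ∧ X.N (p - f) < ε := by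
  obtain ⟨p, p_mem, p_le, p_tendsto⟩ := exists_mem_span_fourier_norm_le_tendsto_ae hf hr hf_le
  have := hX.tendsto_N_sub_of_dominated (BFS.memN_const ((r + 1 : ℝ) : ℂ))
    (fun n => (p n).continuous.aestronglyMeasurable) hf
    (fun n => .of_forall fun t => by
      simpa only [Complex.norm_of_nonneg (by positivity : 0 ≤ r + 1)] using p_le n t) p_tendsto
  obtain ⟨n, hn⟩ := (this.eventually_lt_const hε).exists
  exact ⟨p n, p_mem n, hn⟩

lemma exists_mem_span_fourier_N_sub_lt (hX : OrderContN X.N) {f : 𝕋 → ℂ} (hf : MemN X.N f)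
    {ε : ℝ≥0∞} (hε : 0 < ε) :
    ∃ p : C(𝕋, ℂ), p ∈ Submodule.span ℂ (Set.range fourier) ∧ X.N (p - f) < ε := by
  let F (n : ℕ) (t : 𝕋) : ℂ := radialRetraction (n + 1) (f t)
  have F_meas (n : ℕ) : AEStronglyMeasurable (F n) μ :=
    (continuous_radialRetraction n.cast_add_one_pos).comp_aestronglyMeasurable hf.1
  have F_tendsto : Tendsto (fun n => X.N (F n - f)) atTop (𝓝 0) :=
    hX.tendsto_N_sub_of_dominated hf F_meas hf.1
      (fun n => .of_forall fun t => norm_radialRetraction_le_norm n.cast_add_one_pos.le _)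
      (.of_forall fun t => tendsto_radialRetraction _)
  obtain ⟨n, hn⟩ := (F_tendsto.eventually_lt_const (ENNReal.half_pos hε.ne')).exists
  obtain ⟨p, p_mem, hp⟩ := hX.exists_mem_span_fourier_N_sub_lt_of_norm_le (F_meas n)
    n.cast_add_one_pos (fun t => norm_radialRetraction_le n.cast_add_one_pos.le _)
    (ENNReal.half_pos hε.ne')
  refine ⟨p, p_mem, ?_⟩
  calc X.N (p - f) = X.N ((p - F n) + (F n - f)) := by rw [sub_add_sub_cancel]
    _ ≤ X.N (p - F n) + X.N (F n - f) := X.add_le _ _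
    _ < ε / 2 + ε / 2 := ENNReal.add_lt_add hp hn
    _ = ε := ENNReal.add_halves ε

lemma exists_seq_mem_span_fourier_tendsto (hX : OrderContN X.N) {f : 𝕋 → ℂ} (hf : MemN X.N f) :
    ∃ p : ℕ → C(𝕋, ℂ), (∀ n, p n ∈ Submodule.span ℂ (Set.range fourier)) ∧
      Tendsto (fun n => X.N (p n - f)) atTop (𝓝 0) := by
  choose p p_mem p_lt using fun n : ℕ => hX.exists_mem_span_fourier_N_sub_lt hf
    (ENNReal.inv_pos.2 (ENNReal.natCast_ne_top n))
  exact ⟨p, p_mem, tendsto_of_tendsto_of_tendsto_of_le_of_le tendsto_const_nhds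
    ENNReal.tendsto_inv_nat_nhds_zero (fun _ => zero_le) fun n => (p_lt n).le⟩

end OrderContN

end TrigonometricApproximation

section LaurentOperators

/-- `A` is a bounded linear operator from the space of `X` to that of `Y`. It acts on
representatives, so linearity is required almost everywhere. -/
structure IsBoundedOperator (X Y : BFS) (A : (𝕋 → ℂ) → 𝕋 → ℂ) : Prop where
  map_add : ∀ f g, MemN X.N f → MemN X.N g → A (f + g) =ᵐ[μ] A f + A g
  map_smul : ∀ (c : ℂ) f, MemN X.N f → A (fun t => c * f t) =ᵐ[μ] fun t => c * A f t
  map_mem : ∀ f, MemN X.N f → MemN Y.N (A f)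
  bound : ∃ C < ⊤, ∀ f, MemN X.N f → Y.N (A f) ≤ C * X.N f

namespace IsBoundedOperator

variable {X Y : BFS} {A : (𝕋 → ℂ) → 𝕋 → ℂ}

lemma map_sub (hA : IsBoundedOperator X Y A) {f g : 𝕋 → ℂ} (hf : MemN X.N f) (hg : MemN X.N g) :
    A (f - g) =ᵐ[μ] A f - A g := by
  have sub_eq : f - g = f + fun t => -1 * g t := by ext t; simp [sub_eq_add_neg]
  rw [sub_eq]
  filter_upwards [hA.map_add f _ hf (BFS.memN_const_mul (-1) hg), hA.map_smul (-1) g hg]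
    with t h_add h_smul
  rw [h_add, Pi.add_apply, h_smul, Pi.sub_apply, neg_one_mul, sub_eq_add_neg]

lemma tendsto_N_sub (hA : IsBoundedOperator X Y A) {F : ℕ → 𝕋 → ℂ} {f : 𝕋 → ℂ}
    (hF : ∀ n, MemN X.N (F n)) (hf : MemN X.N f)
    (h : Tendsto (fun n => X.N (F n - f)) atTop (𝓝 0)) :
    Tendsto (fun n => Y.N (A (F n) - A f)) atTop (𝓝 0) := by
  obtain ⟨C, hC, bound⟩ := hA.bound
  have : Tendsto (fun n => C * X.N (F n - f)) atTop (𝓝 0) := by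
    simpa only [mul_zero] using ENNReal.Tendsto.const_mul h (.inr hC.ne)
  refine tendsto_of_tendsto_of_tendsto_of_le_of_le tendsto_const_nhds this (fun _ => zero_le)
    fun n => ?_
  change Y.N _ ≤ _
  rw [← Y.ae_congr _ _ (hA.map_sub (hF n) hf)]
  exact bound _ (BFS.memN_sub (hF n) hf)

lemma ae_eq_mul_of_tendsto (hA : IsBoundedOperator X Y A) {m : 𝕋 → ℂ} {F : ℕ → 𝕋 → ℂ} {f : 𝕋 → ℂ}
    (hF : ∀ n, MemN X.N (F n)) (hf : MemN X.N f) (hAF : ∀ n, A (F n) =ᵐ[μ] fun t => m t * F n t)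
    (h : Tendsto (fun n => X.N (F n - f)) atTop (𝓝 0)) : A f =ᵐ[μ] fun t => m t * f t := by
  obtain ⟨ns, ns_mono, hns⟩ := BFS.exists_subseq_tendsto_ae (fun n => (hF n).1) hf.1 h
  obtain ⟨ks, ks_mono, hks⟩ := BFS.exists_subseq_tendsto_ae
    (fun n => (hA.map_mem _ (hF (ns n))).1) (hA.map_mem f hf).1
    ((hA.tendsto_N_sub hF hf h).comp ns_mono.tendsto_atTop)
  filter_upwards [hns, hks, ae_all_iff.2 hAF] with t hFt hAFt hmul
  simp only [hmul] at hAFt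
  exact tendsto_nhds_unique hAFt ((hFt.comp ks_mono.tendsto_atTop).const_mul (m t))

lemma ae_eq_mul_of_mem_span_fourier (hA : IsBoundedOperator X Y A) {m : 𝕋 → ℂ}
    (h : ∀ j : ℤ, A (fourier j) =ᵐ[μ] fun t => m t * fourier j t) {p : C(𝕋, ℂ)}
    (hp : p ∈ Submodule.span ℂ (Set.range fourier)) : A p =ᵐ[μ] fun t => m t * p t := by
  induction hp using Submodule.span_induction with
  | mem _ hx =>
    obtain ⟨j, rfl⟩ := hx
    exact h j
  | zero =>
    have : A (fun _ => 0) =ᵐ[μ] fun _ => 0 := by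
      simpa only [zero_mul] using hA.map_smul 0 (fun _ => 0) (BFS.memN_const 0)
    simpa only [ContinuousMap.coe_zero, Pi.zero_def, mul_zero] using this
  | add p q _ _ hp hq =>
    filter_upwards [hA.map_add p q (BFS.memN_continuousMap p) (BFS.memN_continuousMap q), hp, hq]
      with t h_add hp hq
    rw [ContinuousMap.coe_add, h_add, Pi.add_apply, hp, hq, Pi.add_apply, mul_add]
  | smul c p _ hp =>
    filter_upwards [hA.map_smul c p (BFS.memN_continuousMap p), hp] with t h_smul hp
    calc A (c • p) t = c * (m t * p t) := by rw [← hp]; exact h_smul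
      _ = m t * (c • p) t := mul_left_comm _ _ _

lemma ae_eq_mul_of_forall_fourier (hA : IsBoundedOperator X Y A) (hX : OrderContN X.N) {m : 𝕋 → ℂ}
    (h : ∀ j : ℤ, A (fourier j) =ᵐ[μ] fun t => m t * fourier j t) {f : 𝕋 → ℂ} (hf : MemN X.N f) :
    A f =ᵐ[μ] fun t => m t * f t := by
  obtain ⟨p, p_mem, hp⟩ := hX.exists_seq_mem_span_fourier_tendsto hf
  exact hA.ae_eq_mul_of_tendsto (fun n => BFS.memN_continuousMap (p n)) hf
    (fun n => hA.ae_eq_mul_of_mem_span_fourier h (p_mem n)) hp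

lemma map_fourier_ae_eq (hA : IsBoundedOperator X Y A) (hY : ∀ f, MemN Y.N f → Integrable f μ)
    {a : ℤ → ℂ} (hmat : ∀ j k : ℤ, fourierCoeff (A (fourier j)) k = a (k - j)) (j : ℤ) :
    A (fourier j) =ᵐ[μ] fun t => A (fourier 0) t * fourier j t := by
  have integrable_map (i : ℤ) : Integrable (A (fourier i)) μ :=
    hY _ (hA.map_mem _ (BFS.memN_continuousMap _))
  simp only [mul_comm _ (fourier j _), ← smul_eq_mul]
  refine ae_eq_of_fourierCoeff_eq (integrable_map j) ((integrable_map 0).fourier_smul j) fun k => ?_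
  rw [fourierCoeff_fourier_smul, hmat, hmat, sub_zero]

end IsBoundedOperator

end LaurentOperators

theorem laurent_matrix_is_multiplication_general (X Y : BFS) (hoc : OrderContN X.N)
    (hY : ∀ f, MemN Y.N f → Integrable f μ) {A : (𝕋 → ℂ) → 𝕋 → ℂ} (hA : IsBoundedOperator X Y A)
    {a : ℤ → ℂ} (hmat : ∀ j k : ℤ, fourierCoeff (A fun x => fourier j x) k = a (k - j)) :
    ∃ m : 𝕋 → ℂ, AEStronglyMeasurable m μ ∧
      (∀ f, MemN X.N f → MemN Y.N (fun t => m t * f t)) ∧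
      (∀ n : ℤ, fourierCoeff m n = a n) ∧
      (∀ f, MemN X.N f → A f =ᵐ[μ] fun t => m t * f t) := by
  have A_eq_mul (f : 𝕋 → ℂ) (hf : MemN X.N f) : A f =ᵐ[μ] fun t => A (fourier 0) t * f t :=
    hA.ae_eq_mul_of_forall_fourier hoc (hA.map_fourier_ae_eq hY hmat) hf
  refine ⟨A (fourier 0), (hA.map_mem _ (BFS.memN_continuousMap _)).1, fun f hf => ?_,
    fun n => (hmat 0 n).trans (by rw [sub_zero]), A_eq_mul⟩
  have Af_mem := hA.map_mem f hf
  exact ⟨Af_mem.1.congr (A_eq_mul f hf), (Y.ae_congr _ _ (A_eq_mul f hf)).symm.trans_lt Af_mem.2⟩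

/-- If a bounded linear operator `A : X → Y` between rearrangement-invariant
Banach function spaces (with `X` separable) has a Laurent (multiplication) matrix
`⟨Aχ_j, χ_k⟩ = a_{k-j}` for all `j,k ∈ ℤ`, then `A` is multiplication by a function
`a ∈ M(X,Y)` whose Fourier coefficients are the `a_n`. -/
theorem laurent_matrix_is_multiplication (X Y : BFS) (hriX : RearrInvN X.N)
    (hriY : RearrInvN Y.N) (hoc : OrderContN X.N)
    (A : (𝕋 → ℂ) → (𝕋 → ℂ))
    (hA_ae : ∀ f g, f =ᵐ[μ] g → A f =ᵐ[μ] A g)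
    (hA_add : ∀ f g, MemN X.N f → MemN X.N g → A (f + g) =ᵐ[μ] A f + A g)
    (hA_smul : ∀ (c : ℂ) f, MemN X.N f → A (fun t => c * f t) =ᵐ[μ] fun t => c * A f t)
    (hA_mem : ∀ f, MemN X.N f → MemN Y.N (A f))
    (C : ℝ≥0∞) (hC : C < ⊤) (hA_bdd : ∀ f, MemN X.N f → Y.N (A f) ≤ C * X.N f)
    (a : ℤ → ℂ)
    (hmat : ∀ j k : ℤ, fourierCoeff (A fun x => fourier j x) k = a (k - j)) :
    ∃ m : 𝕋 → ℂ, AEStronglyMeasurable m μ ∧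
      (∀ f, MemN X.N f → MemN Y.N (fun t => m t * f t)) ∧
      (∀ n : ℤ, fourierCoeff m n = a n) ∧
      (∀ f, MemN X.N f → A f =ᵐ[μ] fun t => m t * f t) := by
  exact laurent_matrix_is_multiplication_general X Y hoc (fun _ => BFS.integrable_of_memN_s6 hriY)
    ⟨hA_add, hA_smul, hA_mem, C, hC, hA_bdd⟩ hmat

end
end
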